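/- arXiv:2009.10399 — 2 statements merged into one kernel-verified Lean document; each statement's English description precedes it below -/
import Mathlib

section
/- Let L, N be a lightlike frame along the unit-speed spacelike curve γ̂. At any singular point (u,v) of the osculating lightlike surface f_L(u,v) = γ̂(u) + v L(u), i.e. whenever v α_L(u) = 1, one has α_L(u) ≠ 0 and the vectors L(u) and L′(u) are linearly independent (so f_L is a front at every singular point); similarly, at any point with v α_N(u) = 1 the vectors N(u) and N′(u) are linearly independent. -/
open scoped Topology

noncomputable section

/-- Points/vectors of Lorentz–Minkowski 3-space `ℝ³₁`. -/
abbrev R3 : Type := Fin 3 → ℝ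

/-- The Lorentz–Minkowski scalar product `⟨x,y⟩ = -x₀y₀ + x₁y₁ + x₂y₂`. -/
def mink (x y : R3) : ℝ := -(x 0 * y 0) + x 1 * y 1 + x 2 * y 2

/-- `(L, N)` is a lightlike frame along the unit-speed spacelike curve `γ` on `I`:
`γ, L, N` are smooth on `I`, `⟨e,e⟩ = 1` (with `e = γ'`), `⟨e,L⟩ = ⟨e,N⟩ = 0`,
`⟨L,L⟩ = ⟨N,N⟩ = 0` and `⟨L,N⟩ = 1` on `I`. -/
structure LightlikeFrame (I : Set ℝ) (γ L N : ℝ → R3) : Prop where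
  smooth_gamma : ContDiffOn ℝ (⊤ : ℕ∞) γ I
  smooth_L : ContDiffOn ℝ (⊤ : ℕ∞) L I
  smooth_N : ContDiffOn ℝ (⊤ : ℕ∞) N I
  unit_speed : ∀ u ∈ I, mink (deriv γ u) (deriv γ u) = 1
  eL : ∀ u ∈ I, mink (deriv γ u) (L u) = 0
  eN : ∀ u ∈ I, mink (deriv γ u) (N u) = 0
  LL : ∀ u ∈ I, mink (L u) (L u) = 0
  NN : ∀ u ∈ I, mink (N u) (N u) = 0
  LN : ∀ u ∈ I, mink (L u) (N u) = 1

/-- `α_L = ⟨γ'', L⟩`. -/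
def alphaL (γ L : ℝ → R3) (u : ℝ) : ℝ := mink (deriv (deriv γ) u) (L u)

/-- `α_N = ⟨γ'', N⟩`. -/
def alphaN (γ N : ℝ → R3) (u : ℝ) : ℝ := mink (deriv (deriv γ) u) (N u)

/-- `α_G = ⟨L, N'⟩`. -/
def alphaG (L N : ℝ → R3) (u : ℝ) : ℝ := mink (L u) (deriv N u)

/-- `σ_L = α_L' + α_L α_G`. -/
def sigmaL (γ L N : ℝ → R3) (u : ℝ) : ℝ :=
  deriv (alphaL γ L) u + alphaL γ L u * alphaG L N u

/-- `σ_N = α_N' - α_N α_G`. -/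
def sigmaN (γ L N : ℝ → R3) (u : ℝ) : ℝ :=
  deriv (alphaN γ N) u - alphaN γ N u * alphaG L N u

/-!
With `e = γ'`, differentiating `⟨e, L⟩ = 0` gives `⟨e, L'⟩ = -⟨e', L⟩ = -α_L`. At a singular point
`α_L ≠ 0`, so the functional `⟨e, ·⟩` annihilates `L` but not `L'`; moreover `L ≠ 0`, as
`⟨e', L⟩ ≠ 0`.
-/

theorem linearIndependent_pair_of_map_eq_zero {K V W : Type*} [DivisionRing K]
    [AddCommGroup V] [Module K V] [AddCommGroup W] [Module K W] (f : V →ₗ[K] W) {x y : V}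
    (hx : x ≠ 0) (hfx : f x = 0) (hfy : f y ≠ 0) : LinearIndependent K ![x, y] := by
  refine (LinearIndependent.pair_iff' hx).2 ?_
  rintro c rfl
  exact hfy (by rw [map_smul, hfx, smul_zero])

section Bilinear

variable {𝕜 E F G : Type*} [NontriviallyNormedField 𝕜]
  [NormedAddCommGroup E] [NormedSpace 𝕜 E] [NormedAddCommGroup F] [NormedSpace 𝕜 F]
  [NormedAddCommGroup G] [NormedSpace 𝕜 G] (B : E →L[𝕜] F →L[𝕜] G)

theorem apply_deriv_eq_neg_of_eventually_apply_eq_zero {e : 𝕜 → E} {X : 𝕜 → F} {e' : E} {X' : F}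
    {u : 𝕜} (he : HasDerivAt e e' u) (hX : HasDerivAt X X' u)
    (horth : ∀ᶠ t in 𝓝 u, B (e t) (X t) = 0) : B (e u) X' = -B e' (X u) := by
  have hzero : HasDerivAt (fun t => B (e t) (X t)) 0 u :=
    (hasDerivAt_const u 0).congr_of_eventuallyEq horth
  have hprod : HasDerivAt (fun t => B (e t) (X t)) (B (e u) X' + B e' (X u)) u :=
    B.hasDerivAt_of_bilinear (fun _ => he) fun _ => hX
  exact eq_neg_of_add_eq_zero_left (hprod.unique hzero)

theorem linearIndependent_deriv_of_eventually_apply_eq_zero {e : 𝕜 → E} {X : 𝕜 → F} {e' : E}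
    {X' : F} {u : 𝕜} (he : HasDerivAt e e' u) (hX : HasDerivAt X X' u)
    (horth : ∀ᶠ t in 𝓝 u, B (e t) (X t) = 0) (hne : B e' (X u) ≠ 0) :
    LinearIndependent 𝕜 ![X u, X'] := by
  have hXu : X u ≠ 0 := fun h => hne (by rw [h, map_zero])
  have hX' : B (e u) X' ≠ 0 := by
    rw [apply_deriv_eq_neg_of_eventually_apply_eq_zero B he hX horth]
    exact neg_ne_zero.2 hne
  exact linearIndependent_pair_of_map_eq_zero (B (e u)).toLinearMap hXu horth.self_of_nhds hX'

theorem front_at_singular_points_general (B : E →L[𝕜] F →L[𝕜] 𝕜) {I : Set 𝕜} (hI : IsOpen I)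
    {γ : 𝕜 → E} {X : 𝕜 → F} (hγ : ContDiffOn 𝕜 2 γ I) (hX : DifferentiableOn 𝕜 X I)
    (horth : ∀ u ∈ I, B (deriv γ u) (X u) = 0) {u : 𝕜} (hu : u ∈ I) {v : 𝕜}
    (hv : v * B (deriv (deriv γ) u) (X u) = 1) :
    B (deriv (deriv γ) u) (X u) ≠ 0 ∧ LinearIndependent 𝕜 ![X u, deriv X u] := by
  have hIu : I ∈ 𝓝 u := hI.mem_nhds hu
  have hγ' : DifferentiableOn 𝕜 (deriv γ) I :=
    (hγ.deriv_of_isOpen hI one_add_one_eq_two.le).differentiableOn one_ne_zero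
  have hne : B (deriv (deriv γ) u) (X u) ≠ 0 := right_ne_zero_of_mul_eq_one hv
  exact ⟨hne, linearIndependent_deriv_of_eventually_apply_eq_zero B (hγ'.hasDerivAt hIu)
    (hX.hasDerivAt hIu) (Filter.eventually_of_mem hIu horth) hne⟩

end Bilinear

/-- The scalar product `mink` as a continuous bilinear form, which makes the product rule for
bilinear maps available. -/
def minkForm : R3 →L[ℝ] R3 →L[ℝ] ℝ :=
  (LinearMap.mk₂ ℝ mink
    (fun x y z => by simp only [mink, Pi.add_apply]; ring)
    (fun c x y => by simp only [mink, Pi.smul_apply, smul_eq_mul]; ring)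
    (fun x y z => by simp only [mink, Pi.add_apply]; ring)
    (fun c x y => by simp only [mink, Pi.smul_apply, smul_eq_mul]; ring)).toContinuousBilinearMap

/-- At any singular point `(u,v)` of `f_L` (i.e. `v α_L(u) = 1`) one has
`α_L(u) ≠ 0` and `L(u)`, `L'(u)` are linearly independent (so `f_L` is a front at every
singular point); similarly for `f_N`. -/
theorem front_at_singular_points (a b : ℝ) (γ L N : ℝ → R3)
    (hframe : LightlikeFrame (Set.Ioo a b) γ L N) :
    ∀ u ∈ Set.Ioo a b, ∀ v : ℝ,
      (v * alphaL γ L u = 1 →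
        alphaL γ L u ≠ 0 ∧ LinearIndependent ℝ ![L u, deriv L u]) ∧
      (v * alphaN γ N u = 1 →
        alphaN γ N u ≠ 0 ∧ LinearIndependent ℝ ![N u, deriv N u]) := by
  have hγ : ContDiffOn ℝ 2 γ (Set.Ioo a b) := contDiffOn_infty.1 hframe.smooth_gamma 2
  have front {X : ℝ → R3} (hX : ContDiffOn ℝ (⊤ : ℕ∞) X (Set.Ioo a b)) :=
    front_at_singular_points_general minkForm isOpen_Ioo hγ (hX.differentiableOn (by simp))
  exact fun _ hu _ => ⟨front hframe.smooth_L hframe.eL hu, front hframe.smooth_N hframe.eN hu⟩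
end
end

section
/- Let L, N be a lightlike frame along the unit-speed spacelike curve γ̂ and let u₀ ∈ I with α_L(u₀) ≠ 0. Then the osculating lightlike surface f_L(u,v) = γ̂(u) + v L(u) has a cuspidal edge at the singular point (u₀, 1/α_L(u₀)) if and only if σ_L(u₀) ≠ 0; similarly, if α_N(u₀) ≠ 0, the transversal lightlike surface f_N(u,v) = γ̂(u) + v N(u) has a cuspidal edge at (u₀, 1/α_N(u₀)) if and only if σ_N(u₀) ≠ 0. -/
open scoped Topology

noncomputable section

/-- `φ` is a local diffeomorphism at `p`: it is smooth near `p` with a smooth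
local inverse. -/
def IsLocalDiffeoAt {E : Type*} [NormedAddCommGroup E] [NormedSpace ℝ E]
    (φ : E → E) (p : E) : Prop :=
  ∃ U V : Set E, IsOpen U ∧ IsOpen V ∧ p ∈ U ∧ φ '' U = V ∧
    ContDiffOn ℝ (⊤ : ℕ∞) φ U ∧
    ∃ ψ : E → E, ContDiffOn ℝ (⊤ : ℕ∞) ψ V ∧
      (∀ x ∈ U, ψ (φ x) = x) ∧ (∀ y ∈ V, φ (ψ y) = y)

/-- The map germ of `f` at `p` is `𝒜`-equivalent to the germ of `g` at `q`:
there are diffeomorphism germs `φ` of the source with `φ p = q` and `Φ` of the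
target with `Φ (f p) = g q` such that `Φ ∘ f = g ∘ φ` near `p`. -/
def AEquivAt {E F : Type*} [NormedAddCommGroup E] [NormedSpace ℝ E]
    [NormedAddCommGroup F] [NormedSpace ℝ F]
    (f : E → F) (p : E) (g : E → F) (q : E) : Prop :=
  ∃ (φ : E → E) (Φ : F → F), IsLocalDiffeoAt φ p ∧ IsLocalDiffeoAt Φ (f p) ∧
    φ p = q ∧ Φ (f p) = g q ∧
    ∃ U : Set E, IsOpen U ∧ p ∈ U ∧ ∀ x ∈ U, Φ (f x) = g (φ x)

/-- `f` has a cuspidal edge at `p`: it is `𝒜`-equivalent at `p` to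
`(u,v) ↦ (u, v², v³)` at the origin. -/
def IsCuspidalEdge (f : ℝ × ℝ → R3) (p : ℝ × ℝ) : Prop :=
  AEquivAt f p (fun q : ℝ × ℝ => ![q.1, q.2 ^ 2, q.2 ^ 3]) (0, 0)

/-- `f` has a swallowtail at `p`: it is `𝒜`-equivalent at `p` to
`(u,v) ↦ (u, 4v³ + 2uv, 4v⁴ + uv²)` at the origin. -/
def IsSwallowtail (f : ℝ × ℝ → R3) (p : ℝ × ℝ) : Prop :=
  AEquivAt f p
    (fun q : ℝ × ℝ => ![q.1, 4 * q.2 ^ 3 + 2 * q.1 * q.2, 4 * q.2 ^ 4 + q.1 * q.2 ^ 2]) (0, 0)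

/-!
A lightlike frame satisfies `L' = -α_G L - α_L γ'`, so the striction curve `c = γ + (1 / α_L) L`
has `c' = -(σ_L / α_L²) L`: the surface is developable with singular set `v = 1 / α_L(u)`.

If `σ_L(u₀) ≠ 0`, it is near the singular point the tangent developable of `c`, and
`c', c'', c'''` are independent at `u₀`. Parametrize it by
`(s, t) ↦ c(u₀ + s + t) - t c'(u₀ + s + t)` and split `c(u₀ + s + t) = A(s, t²) + t B(s, t²)` with
smooth `A`, `B` (Whitney's theorem on even functions). The terms linear in `t` cancel, and what
remains is
`(A - 2 t² A_y)(s, t²) - 2 t³ B_y(s, t²)`, the image of the standard cuspidal edge `(s, t², t³)`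
under a local diffeomorphism of the target.

If `σ_L(u₀) = 0`, the singular curve `c` is not immersed at `u₀`; but a cuspidal edge is immersive
along every regular curve in its singular set.

Whitney's theorem: an even function `h(t)`, read as a function of `y = t²`, extends smoothly to
`y < 0` by the averages of its dilates against a kernel with even moments `(-1)ᵐ`, which imitate
`h(i √(-y))`. Such a kernel exists because the moments of a Schwartz function are, up to constants,
the derivatives of its Fourier transform at `0`, which can be any smooth germ: here an exponential.
-/

open scoped ContDiff FourierTransform
open MeasureTheory Filter Set

section TestFunctions

variable {E F : Type*} [NormedAddCommGroup E] [NormedSpace ℝ E]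
  [NormedAddCommGroup F] [NormedSpace ℝ F]

/-- A test function: a smooth function of compact support. -/
structure IsTestFunction (h : E → F) : Prop where
  contDiff : ContDiff ℝ ∞ h
  hasCompactSupport : HasCompactSupport h

lemma IsTestFunction.exists_bound {h : E → F} (hh : IsTestFunction h) : ∃ C, ∀ p, ‖h p‖ ≤ C :=
  hh.hasCompactSupport.exists_bound_of_continuous hh.contDiff.continuous

lemma IsTestFunction.add {f g : E → F} (hf : IsTestFunction f) (hg : IsTestFunction g) :
    IsTestFunction (fun x => f x + g x) :=
  ⟨hf.contDiff.add hg.contDiff, hf.hasCompactSupport.add hg.hasCompactSupport⟩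

lemma IsTestFunction.const_smul {f : E → F} (hf : IsTestFunction f) (c : ℝ) :
    IsTestFunction (fun x => c • f x) :=
  ⟨contDiff_const.smul hf.contDiff, hf.hasCompactSupport.smul_left (f := fun _ => c)⟩

lemma exists_isTestFunction_eventuallyEq [FiniteDimensional ℝ E] {f : E → F} {U : Set E}
    (hf : ContDiffOn ℝ ∞ f U) (hU : IsOpen U) {x : E} (hx : x ∈ U) :
    ∃ g : E → F, IsTestFunction g ∧ g =ᶠ[𝓝 x] f := by
  obtain ⟨r, hr, hrU⟩ := Metric.nhds_basis_closedBall.mem_iff.1 (hU.mem_nhds hx)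
  let χ : ContDiffBump x := ⟨r / 2, r, half_pos hr, half_lt_self hr⟩
  have hsmooth : ContDiff ℝ ∞ fun y => χ y • f y :=
    contMDiff_iff_contDiff.1 <| contMDiff_of_tsupport fun y hy => by
      have hyU : y ∈ U := hrU (χ.tsupport_eq ▸ tsupport_smul_subset_left χ f hy)
      exact (χ.contDiffAt.smul (hf.contDiffAt (hU.mem_nhds hyU))).contMDiffAt
  refine ⟨fun y => χ y • f y, ⟨hsmooth, χ.hasCompactSupport.smul_right⟩, ?_⟩
  filter_upwards [χ.eventuallyEq_one] with y hy
  simp [hy]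

end TestFunctions

section Kernels

/-- A real kernel all of whose moments exist. -/
def HasMoments (k : ℝ → ℝ) : Prop := ∀ n : ℕ, Integrable (fun x : ℝ => x ^ n * k x)

lemma HasMoments.integrable {k : ℝ → ℝ} (hk : HasMoments k) : Integrable k := by
  simpa using hk 0

lemma HasMoments.pow_mul {k : ℝ → ℝ} (hk : HasMoments k) (m : ℕ) :
    HasMoments (fun x => x ^ m * k x) := fun n => by
  simpa [pow_add, mul_assoc] using hk (n + m)

lemma HasMoments.id_mul {k : ℝ → ℝ} (hk : HasMoments k) : HasMoments (fun x => x * k x) := by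
  simpa using hk.pow_mul 1

lemma HasMoments.neg {k : ℝ → ℝ} (hk : HasMoments k) : HasMoments (fun x => -k x) :=
  fun n => by simpa using (hk n).neg

lemma hasMoments_indicator_Ioc : HasMoments ((Ioc (0 : ℝ) 1).indicator 1) := fun n => by
  have hpow : IntegrableOn (fun x : ℝ => x ^ n) (Ioc 0 1) :=
    (continuous_pow n).integrableOn_Ioc
  refine (hpow.integrable_indicator measurableSet_Ioc).congr (.of_forall fun x => ?_)
  by_cases hx : x ∈ Ioc (0 : ℝ) 1 <;> simp [hx]

/-- A kernel whose even moments are those of a point mass at the imaginary unit. Averaging the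
dilates of `h` against it replaces the Taylor coefficient `h₂ₘ` by `(-1)ᵐ h₂ₘ`, that is, it
imitates the substitution of `i t` for `t`. -/
structure IsAlternatingKernel (k : ℝ → ℝ) : Prop where
  hasMoments : HasMoments k
  integral_pow_mul : ∀ m : ℕ, ∫ x, x ^ (2 * m) * k x = (-1) ^ m

lemma IsAlternatingKernel.integral_eq_one {k : ℝ → ℝ} (hk : IsAlternatingKernel k) :
    ∫ x, k x = 1 := by simpa using hk.integral_pow_mul 0

lemma IsAlternatingKernel.neg_sq_mul {k : ℝ → ℝ} (hk : IsAlternatingKernel k) :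
    IsAlternatingKernel (fun x => -(x ^ 2 * k x)) where
  hasMoments := (hk.hasMoments.pow_mul 2).neg
  integral_pow_mul m := calc
    ∫ x, x ^ (2 * m) * -(x ^ 2 * k x) = ∫ x, -(x ^ (2 * (m + 1)) * k x) := by
      congr with x; ring
    _ = (-1) ^ (m + 1) * -1 := by rw [integral_neg, hk.integral_pow_mul]; ring
    _ = (-1) ^ m := by ring

lemma integrable_pow_smul_schwartzMap (κ : SchwartzMap ℝ ℂ) (n : ℕ) :
    Integrable (fun x : ℝ => x ^ n • κ x) :=
  (integrable_norm_iff ((continuous_pow n).smul κ.continuous).aestronglyMeasurable).1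
    (by simpa [norm_smul] using κ.integrable_pow_mul volume n)

lemma iteratedDeriv_fourier_schwartzMap_zero (κ : SchwartzMap ℝ ℂ) (n : ℕ) :
    iteratedDeriv n (𝓕 (κ : ℝ → ℂ)) 0 =
      (-2 * Real.pi * Complex.I) ^ n * ∫ x : ℝ, x ^ n • κ x := by
  rw [Real.iteratedDeriv_fourier (N := ⊤) (fun m _ => integrable_pow_smul_schwartzMap κ m) le_top,
    Real.fourier_eq, ← integral_const_mul]
  congr with x
  simp only [inner_zero_right, neg_zero, AddChar.map_zero_eq_one, one_smul, mul_pow, smul_eq_mul,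
    Complex.real_smul, Complex.ofReal_pow, mul_assoc]

lemma iteratedDeriv_cexp_const_mul_ofReal (n : ℕ) (c : ℂ) :
    iteratedDeriv n (fun x : ℝ => Complex.exp (c * x)) =
      fun x : ℝ => c ^ n * Complex.exp (c * x) := by
  induction n with
  | zero => simp
  | succ n ih =>
    rw [iteratedDeriv_succ, ih]
    funext x
    have hlin : HasDerivAt (fun x : ℝ => c * (x : ℂ)) c x := by
      simpa using (Complex.ofRealCLM.hasDerivAt (x := x)).const_mul c
    rw [(hlin.cexp.const_mul (c ^ n)).deriv]
    ring

lemma exists_schwartzMap_integral_pow_smul_eq_I_pow :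
    ∃ κ : SchwartzMap ℝ ℂ, ∀ n : ℕ, ∫ x : ℝ, x ^ n • κ x = Complex.I ^ n := by
  have hexp : ContDiff ℝ ∞ fun x : ℝ => Complex.exp (2 * Real.pi * x) :=
    (contDiff_const.mul Complex.ofRealCLM.contDiff).cexp
  obtain ⟨ψ, hψ, hψexp⟩ :=
    exists_isTestFunction_eventuallyEq hexp.contDiffOn isOpen_univ (mem_univ 0)
  let κ : SchwartzMap ℝ ℂ := 𝓕⁻ (hψ.hasCompactSupport.toSchwartzMap hψ.contDiff)
  have hκ : 𝓕 (κ : ℝ → ℂ) = ψ := by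
    rw [← SchwartzMap.fourier_coe, FourierTransform.fourier_fourierInv_eq]
    rfl
  refine ⟨κ, fun n => ?_⟩
  have hmoment : (2 * Real.pi : ℂ) ^ n =
      (-2 * Real.pi * Complex.I) ^ n * ∫ x : ℝ, x ^ n • κ x := by
    rw [← iteratedDeriv_fourier_schwartzMap_zero, hκ, hψexp.iteratedDeriv_eq,
      iteratedDeriv_cexp_const_mul_ofReal]
    simp
  have hI : (2 * Real.pi : ℂ) ^ n = (-2 * Real.pi * Complex.I) ^ n * Complex.I ^ n := by
    rw [← mul_pow, mul_assoc, Complex.I_mul_I]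
    congr 1
    ring
  have hne : (-2 * Real.pi * Complex.I : ℂ) ^ n ≠ 0 := pow_ne_zero _ (by simp)
  exact mul_left_cancel₀ hne (hmoment.symm.trans hI)

lemma exists_isAlternatingKernel : ∃ k, IsAlternatingKernel k := by
  obtain ⟨κ, hκ⟩ := exists_schwartzMap_integral_pow_smul_eq_I_pow
  have hre (n : ℕ) (x : ℝ) : x ^ n * (κ x).re = Complex.reCLM (x ^ n • κ x) := by
    rw [map_smul]; rfl
  refine ⟨fun x => (κ x).re, fun n => ?_, fun m => ?_⟩
  · simp only [hre]
    exact Complex.reCLM.integrable_comp (integrable_pow_smul_schwartzMap κ n)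
  · simp only [hre]
    rw [Complex.reCLM.integral_comp_comm (integrable_pow_smul_schwartzMap κ _), hκ, pow_mul,
      Complex.I_sq]
    simpa using Complex.ofReal_re ((-1) ^ m)

end Kernels

universe u

section PartialDerivatives

variable {P E : Type*} [NormedAddCommGroup P] [NormedSpace ℝ P]
  [NormedAddCommGroup E] [NormedSpace ℝ E]

/-- The partial derivative of a map on `P × ℝ` in the variable of `P`. -/
def fderivFst (h : P × ℝ → E) (p : P × ℝ) : P →L[ℝ] E :=
  fderiv ℝ h p ∘L ContinuousLinearMap.inl ℝ P ℝ

/-- The partial derivative of a map on `P × ℝ` in the real variable. -/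
def derivSnd (h : P × ℝ → E) (p : P × ℝ) : E := fderiv ℝ h p (0, 1)

lemma hasFDerivAt_prodMk_fst {h : P × ℝ → E} {s : P} {t : ℝ} (hh : DifferentiableAt ℝ h (s, t)) :
    HasFDerivAt (fun x => h (x, t)) (fderivFst h (s, t)) s :=
  hh.hasFDerivAt.comp s (hasFDerivAt_prodMk_left s t)

lemma hasDerivAt_prodMk_snd {h : P × ℝ → E} {s : P} {t : ℝ} (hh : DifferentiableAt ℝ h (s, t)) :
    HasDerivAt (fun x => h (s, x)) (derivSnd h (s, t)) t :=
  hh.hasFDerivAt.comp_hasDerivAt t ((hasDerivAt_const t s).prodMk (hasDerivAt_id t))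

lemma contDiff_derivSnd {h : P × ℝ → E} (hh : ContDiff ℝ ∞ h) : ContDiff ℝ ∞ (derivSnd h) :=
  (hh.fderiv_right (by simp)).clm_apply contDiff_const

lemma isTestFunction_fderivFst {h : P × ℝ → E} (hh : IsTestFunction h) :
    IsTestFunction (fderivFst h) :=
  ⟨(hh.contDiff.fderiv_right (by simp)).clm_comp contDiff_const,
    (hh.hasCompactSupport.fderiv ℝ).comp_left (g := fun A : P × ℝ →L[ℝ] E =>
      A ∘L ContinuousLinearMap.inl ℝ P ℝ) (ContinuousLinearMap.zero_comp _)⟩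

lemma isTestFunction_derivSnd {h : P × ℝ → E} (hh : IsTestFunction h) :
    IsTestFunction (derivSnd h) :=
  ⟨contDiff_derivSnd hh.contDiff, hh.hasCompactSupport.fderiv_apply ℝ (0, 1)⟩

lemma contDiff_succ_of_partials {n : ℕ} {f : P × ℝ → E} {f₁ : P × ℝ → P →L[ℝ] E}
    {f₂ : P × ℝ → E} (h₁ : ∀ s t, HasFDerivAt (fun x => f (x, t)) (f₁ (s, t)) s)
    (h₂ : ∀ s t, HasDerivAt (fun x => f (s, x)) (f₂ (s, t)) t)
    (hf₁ : ContDiff ℝ n f₁) (hf₂ : ContDiff ℝ n f₂) : ContDiff ℝ (n + 1 : ℕ) f := by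
  have hspan : ContDiff ℝ n fun p => ContinuousLinearMap.toSpanSingleton ℝ (f₂ p) :=
    (ContinuousLinearMap.toSpanSingletonCLE (𝕜 := ℝ) (E := E)).contDiff.comp hf₂
  rw [Nat.cast_succ, contDiff_succ_iff_hasFDerivAt]
  refine ⟨fun p => (f₁ p).coprod (ContinuousLinearMap.toSpanSingleton ℝ (f₂ p)),
    (ContinuousLinearMap.coprodEquivL (𝕜 := ℝ) (E := P) (F := ℝ) (G := E) (S := ℝ)).contDiff.comp
      (hf₁.prodMk hspan),
    fun p => ?_⟩
  exact (hasStrictFDerivAt_uncurry_coprod (f := fun s t => f (s, t)) (f₁ := fun s t => f₁ (s, t))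
    (f₂ := fun s t => ContinuousLinearMap.toSpanSingleton ℝ (f₂ (s, t))) (u := p)
    (.of_forall fun v => h₁ v.1 v.2) (.of_forall fun v => (h₂ v.1 v.2).hasFDerivAt)
    hf₁.continuous.continuousAt hspan.continuous.continuousAt).hasFDerivAt

end PartialDerivatives

section DilationAverages

-- One universe for `P` and `E`, so that inductions on smoothness may replace `E` by `P →L[ℝ] E`.
variable {P E : Type u} [NormedAddCommGroup P] [NormedSpace ℝ P]
  [NormedAddCommGroup E] [NormedSpace ℝ E] {k : ℝ → ℝ} {h : P × ℝ → E}

/-- The average of the dilates `h (s, t ξ)` against the kernel `k`. -/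
def dilAvg (k : ℝ → ℝ) (h : P × ℝ → E) (p : P × ℝ) : E := ∫ ξ, k ξ • h (p.1, p.2 * ξ)

lemma IsTestFunction.integrable_dilation (hh : IsTestFunction h) (hk : Integrable k)
    (p : P × ℝ) : Integrable (fun ξ => k ξ • h (p.1, p.2 * ξ)) := by
  obtain ⟨C, hC⟩ := hh.exists_bound
  have hcont : Continuous (fun ξ : ℝ => h (p.1, p.2 * ξ)) :=
    hh.contDiff.continuous.comp (by fun_prop)
  exact hk.smul_bdd C hcont.aestronglyMeasurable (.of_forall fun ξ => hC _)

lemma norm_smul_le_norm_mul {c : ℝ} {x : E} {C : ℝ} (hx : ‖x‖ ≤ C) : ‖c • x‖ ≤ ‖c‖ * C :=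
  (norm_smul c x).trans_le (mul_le_mul_of_nonneg_left hx (norm_nonneg c))

lemma continuous_dilAvg (hk : Integrable k) (hh : IsTestFunction h) :
    Continuous (dilAvg k h) := by
  obtain ⟨C, hC⟩ := hh.exists_bound
  exact continuous_of_dominated (bound := fun ξ => ‖k ξ‖ * C)
    (fun p => (hh.integrable_dilation hk p).aestronglyMeasurable)
    (fun p => .of_forall fun ξ => norm_smul_le_norm_mul (hC _)) (hk.norm.mul_const C)
    (.of_forall fun ξ => (hh.contDiff.continuous.comp (by fun_prop)).const_smul _)

lemma hasFDerivAt_dilAvg_fst (hk : Integrable k) (hh : IsTestFunction h) (s : P) (t : ℝ) :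
    HasFDerivAt (fun x => dilAvg k h (x, t)) (dilAvg k (fderivFst h) (s, t)) s := by
  obtain ⟨C, hC⟩ := (isTestFunction_fderivFst hh).exists_bound
  exact hasFDerivAt_integral_of_dominated_of_fderiv_le univ_mem
    (F := fun x ξ => k ξ • h (x, t * ξ)) (bound := fun ξ => ‖k ξ‖ * C)
    (F' := fun x ξ => k ξ • fderivFst h (x, t * ξ))
    (.of_forall fun x => (hh.integrable_dilation hk (x, t)).aestronglyMeasurable)
    (hh.integrable_dilation hk (s, t))
    ((isTestFunction_fderivFst hh).integrable_dilation hk (s, t)).aestronglyMeasurable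
    (.of_forall fun ξ x _ => norm_smul_le_norm_mul (hC _)) (hk.norm.mul_const C)
    (.of_forall fun ξ x _ => (hasFDerivAt_prodMk_fst
      (hh.contDiff.differentiable (by simp) _)).const_smul (k ξ))

lemma hasDerivAt_dilAvg_snd (hk : HasMoments k) (hh : IsTestFunction h) (s : P) (t : ℝ) :
    HasDerivAt (fun x => dilAvg k h (s, x)) (dilAvg (fun ξ => ξ * k ξ) (derivSnd h) (s, t)) t := by
  obtain ⟨C, hC⟩ := (isTestFunction_derivSnd hh).exists_bound
  have hk' := hk.id_mul.integrable
  have hderiv (ξ x : ℝ) : HasDerivAt (fun y => k ξ • h (s, y * ξ))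
      ((ξ * k ξ) • derivSnd h (s, x * ξ)) x := by
    have hdil := (hasDerivAt_prodMk_snd (hh.contDiff.differentiable (by simp) (s, x * ξ))).scomp x
      (hasDerivAt_mul_const ξ)
    rw [mul_comm, mul_smul]
    exact hdil.const_smul (k ξ)
  exact (hasDerivAt_integral_of_dominated_loc_of_deriv_le univ_mem
    (F := fun x ξ => k ξ • h (s, x * ξ)) (bound := fun ξ => ‖ξ * k ξ‖ * C)
    (F' := fun x ξ => (ξ * k ξ) • derivSnd h (s, x * ξ))
    (.of_forall fun x => (hh.integrable_dilation hk.integrable (s, x)).aestronglyMeasurable)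
    (hh.integrable_dilation hk.integrable (s, t))
    ((isTestFunction_derivSnd hh).integrable_dilation hk' (s, t)).aestronglyMeasurable
    (.of_forall fun ξ x _ => norm_smul_le_norm_mul (hC _)) (hk'.norm.mul_const C)
    (.of_forall fun ξ x _ => hderiv ξ x)).2

lemma contDiff_dilAvg (hk : HasMoments k) (hh : IsTestFunction h) :
    ContDiff ℝ ∞ (dilAvg k h) := by
  rw [contDiff_infty]
  intro n
  induction n generalizing k E with
  | zero => exact contDiff_zero.2 (continuous_dilAvg hk.integrable hh)
  | succ n ih =>
    exact contDiff_succ_of_partials (hasFDerivAt_dilAvg_fst hk.integrable hh)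
      (hasDerivAt_dilAvg_snd hk hh) (ih hk (isTestFunction_fderivFst hh))
      (ih hk.id_mul (isTestFunction_derivSnd hh))

lemma IsTestFunction.exists_eq_add_smul [CompleteSpace E] (hh : IsTestFunction h) :
    ∃ q : P × ℝ → E, ContDiff ℝ ∞ q ∧ ∀ s t, h (s, t) = h (s, 0) + t • q (s, t) := by
  refine ⟨dilAvg ((Ioc (0 : ℝ) 1).indicator 1) (derivSnd h),
    contDiff_dilAvg hasMoments_indicator_Ioc (isTestFunction_derivSnd hh), fun s t => ?_⟩
  have havg : dilAvg ((Ioc (0 : ℝ) 1).indicator 1) (derivSnd h) (s, t) =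
      ∫ ξ in (0 : ℝ)..1, derivSnd h (s, t * ξ) := by
    rw [intervalIntegral.integral_of_le zero_le_one, ← integral_indicator measurableSet_Ioc]
    refine integral_congr_ae (.of_forall fun ξ => ?_)
    by_cases hξ : ξ ∈ Ioc (0 : ℝ) 1 <;> simp [hξ]
  have hderiv (ξ : ℝ) : HasDerivAt (fun ξ => h (s, t * ξ)) (t • derivSnd h (s, t * ξ)) ξ :=
    (hasDerivAt_prodMk_snd (hh.contDiff.differentiable (by simp) (s, t * ξ))).scomp ξ
      (hasDerivAt_const_mul t)
  have hcont : Continuous fun ξ : ℝ => t • derivSnd h (s, t * ξ) :=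
    ((isTestFunction_derivSnd hh).contDiff.continuous.comp (by fun_prop)).const_smul t
  have hftc := intervalIntegral.integral_eq_sub_of_hasDerivAt (a := (0 : ℝ)) (b := 1)
    (fun ξ _ => hderiv ξ) (hcont.intervalIntegrable _ _)
  rw [havg, ← intervalIntegral.integral_smul, hftc]
  simp

lemma IsTestFunction.of_eq_smul {q : P × ℝ → E} (hh : IsTestFunction h) (hq : ContDiff ℝ ∞ q)
    (hhq : ∀ s t, h (s, t) = t • q (s, t)) : IsTestFunction q := by
  refine ⟨hq, hh.hasCompactSupport.mono' ?_⟩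
  have hdense : Dense {p : P × ℝ | p.2 ≠ 0} :=
    (dense_compl_singleton (0 : ℝ)).preimage isOpenMap_snd
  have hopen : IsOpen (Function.support q) := hq.continuous.isOpen_support
  refine (hdense.open_subset_closure_inter hopen).trans (closure_mono ?_)
  rintro ⟨s, t⟩ ⟨hqp, ht⟩
  rw [Function.mem_support, hhq]
  exact smul_ne_zero ht hqp

end DilationAverages

section EvenFunctions

variable {P E : Type u} [NormedAddCommGroup E] [NormedSpace ℝ E] {k : ℝ → ℝ} {h D : P × ℝ → E}

/-- The function `(s, y) ↦ h (s, √y)`, extended to negative `y` by averages of `h`; for an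
alternating kernel these imitate the values `h (s, i √(-y))`. -/
def evenExt (k : ℝ → ℝ) (h : P × ℝ → E) (p : P × ℝ) : E :=
  if 0 ≤ p.2 then h (p.1, √p.2) else dilAvg k h (p.1, √(-p.2))

lemma evenExt_sq (heven : ∀ s, Function.Even fun t => h (s, t)) (s : P) (t : ℝ) :
    evenExt k h (s, t ^ 2) = h (s, t) := by
  rw [evenExt, if_pos (sq_nonneg t), Real.sqrt_sq_eq_abs]
  rcases abs_choice t with ht | ht <;> rw [ht]
  exact heven s t

variable [NormedAddCommGroup P] [NormedSpace ℝ P]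

lemma even_fderivFst (hh : Differentiable ℝ h) (heven : ∀ s, Function.Even fun t => h (s, t))
    (s : P) : Function.Even fun t => fderivFst h (s, t) := fun t => by
  have hneg := hasFDerivAt_prodMk_fst (hh (s, -t))
  simp only [(heven _).eq t] at hneg
  exact hneg.unique (hasFDerivAt_prodMk_fst (hh (s, t)))

lemma odd_derivSnd (hh : Differentiable ℝ h) (heven : ∀ s, Function.Even fun t => h (s, t))
    (s : P) : Function.Odd fun t => derivSnd h (s, t) := fun t => by
  have hneg := (hasDerivAt_prodMk_snd (hh (s, -t))).scomp t (hasDerivAt_neg t)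
  have hcomp : (fun x => h (s, x)) ∘ Neg.neg = fun x => h (s, x) := funext (heven s)
  rw [hcomp, neg_one_smul] at hneg
  exact neg_eq_iff_eq_neg.1 (hneg.unique (hasDerivAt_prodMk_snd (hh (s, t))))

lemma IsTestFunction.exists_even_of_odd [CompleteSpace E] (hh : IsTestFunction h)
    (hodd : ∀ s, Function.Odd fun t => h (s, t)) :
    ∃ q : P × ℝ → E, IsTestFunction q ∧ (∀ s, Function.Even fun t => q (s, t)) ∧
      ∀ s t, h (s, t) = t • q (s, t) := by
  obtain ⟨q, hq, hhq⟩ := hh.exists_eq_add_smul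
  have : IsAddTorsionFree E := .of_isTorsionFree ℝ E
  have hzero (s : P) : h (s, 0) = 0 := self_eq_neg.1 (by simpa using hodd s 0)
  simp only [hzero, zero_add] at hhq
  refine ⟨q, hh.of_eq_smul hq hhq, fun s t => ?_, hhq⟩
  rcases eq_or_ne t 0 with rfl | ht
  · simp
  · have hneg := hodd s t
    simp only [hhq, ← neg_smul] at hneg
    exact smul_right_injective E (neg_ne_zero.2 ht) hneg

lemma continuous_evenExt [CompleteSpace E] (hk : IsAlternatingKernel k) (hh : IsTestFunction h) :
    Continuous (evenExt k h) := by
  refine Continuous.if_le (hh.contDiff.continuous.comp (by fun_prop))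
    ((continuous_dilAvg hk.hasMoments.integrable hh).comp (by fun_prop)) continuous_const
    continuous_snd fun p hp => ?_
  simp [dilAvg, ← hp, integral_smul_const, hk.integral_eq_one]

lemma hasFDerivAt_evenExt_fst (hk : Integrable k) (hh : IsTestFunction h) (s : P) (y : ℝ) :
    HasFDerivAt (fun x => evenExt k h (x, y)) (evenExt k (fderivFst h) (s, y)) s := by
  by_cases hy : 0 ≤ y
  · simpa only [evenExt, if_pos hy] using
      hasFDerivAt_prodMk_fst (hh.contDiff.differentiable (by simp) (s, √y))
  · simpa only [evenExt, if_neg hy] using hasFDerivAt_dilAvg_fst hk hh s √(-y)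

lemma hasDerivAt_evenExt_snd_of_pos (hh : Differentiable ℝ h)
    (hD : ∀ s t, derivSnd h (s, t) = (2 * t) • D (s, t)) (s : P) {y : ℝ} (hy : 0 < y) :
    HasDerivAt (fun x => evenExt k h (s, x)) (D (s, √y)) y := by
  have hsqrt := (hasDerivAt_prodMk_snd (hh (s, √y))).scomp y ((hasDerivAt_id y).sqrt hy.ne')
  have hval : (1 / (2 * √y)) • derivSnd h (s, √y) = D (s, √y) := by
    rw [hD, smul_smul, one_div_mul_cancel (by positivity), one_smul]
  rw [id, hval] at hsqrt
  refine hsqrt.congr_of_eventuallyEq ?_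
  filter_upwards [Ioi_mem_nhds hy] with x hx
  simp [evenExt, (mem_Ioi.1 hx).le]

lemma hasDerivAt_evenExt_snd_of_neg (hk : HasMoments k) (hh : IsTestFunction h)
    (hD : ∀ s t, derivSnd h (s, t) = (2 * t) • D (s, t)) (s : P) {y : ℝ} (hy : y < 0) :
    HasDerivAt (fun x => evenExt k h (s, x)) (dilAvg (fun x => -(x ^ 2 * k x)) D (s, √(-y))) y := by
  have hy' : 0 < -y := neg_pos.2 hy
  have hsqrt := (hasDerivAt_dilAvg_snd hk hh s √(-y)).scomp y ((hasDerivAt_neg y).sqrt hy'.ne')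
  have hval : (-1 / (2 * √(-y))) • dilAvg (fun ξ => ξ * k ξ) (derivSnd h) (s, √(-y)) =
      dilAvg (fun x => -(x ^ 2 * k x)) D (s, √(-y)) := by
    rw [dilAvg, dilAvg, ← integral_smul]
    refine integral_congr_ae (.of_forall fun ξ => ?_)
    have hne : √(-y) ≠ 0 := by positivity
    simp only [hD, smul_smul]
    congr 1
    field_simp
  rw [hval] at hsqrt
  refine hsqrt.congr_of_eventuallyEq ?_
  filter_upwards [Iio_mem_nhds hy] with x hx
  simp [evenExt, not_le.2 (mem_Iio.1 hx)]

lemma hasDerivAt_evenExt_snd [CompleteSpace E] (hk : IsAlternatingKernel k)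
    (hh : IsTestFunction h) (hDtest : IsTestFunction D)
    (hD : ∀ s t, derivSnd h (s, t) = (2 * t) • D (s, t)) (s : P) (y : ℝ) :
    HasDerivAt (fun x => evenExt k h (s, x)) (evenExt (fun x => -(x ^ 2 * k x)) D (s, y)) y := by
  have hs : Continuous fun x : ℝ => (s, x) := by fun_prop
  refine hasDerivAt_of_hasDerivAt_of_ne' (x := 0)
    (g := fun y => evenExt (fun x => -(x ^ 2 * k x)) D (s, y)) (fun y hy => ?_)
    ((continuous_evenExt hk hh).comp hs).continuousAt
    ((continuous_evenExt hk.neg_sq_mul hDtest).comp hs).continuousAt y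
  rcases hy.lt_or_gt with hy | hy
  · simpa only [evenExt, if_neg hy.not_ge] using!
      hasDerivAt_evenExt_snd_of_neg hk.hasMoments hh hD s hy
  · simpa only [evenExt, if_pos hy.le] using!
      hasDerivAt_evenExt_snd_of_pos (k := k) (hh.contDiff.differentiable (by simp)) hD s hy

lemma contDiff_evenExt [CompleteSpace E] (hk : IsAlternatingKernel k) (hh : IsTestFunction h)
    (heven : ∀ s, Function.Even fun t => h (s, t)) : ContDiff ℝ ∞ (evenExt k h) := by
  rw [contDiff_infty]
  intro n
  induction n generalizing k E with
  | zero => exact contDiff_zero.2 (continuous_evenExt hk hh)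
  | succ n ih =>
    have hdiff := hh.contDiff.differentiable (by simp)
    obtain ⟨q, hq, hqeven, hhq⟩ :=
      (isTestFunction_derivSnd hh).exists_even_of_odd (odd_derivSnd hdiff heven)
    have hhalf (s : P) (t : ℝ) : derivSnd h (s, t) = (2 * t) • (2 : ℝ)⁻¹ • q (s, t) := by
      rw [hhq, mul_comm, mul_smul, smul_inv_smul₀ two_ne_zero]
    exact contDiff_succ_of_partials (hasFDerivAt_evenExt_fst hk.hasMoments.integrable hh)
      (hasDerivAt_evenExt_snd hk hh (hq.const_smul _) hhalf)
      (ih hk (isTestFunction_fderivFst hh) (even_fderivFst hdiff heven))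
      (ih hk.neg_sq_mul (hq.const_smul _) fun s t => by simp only [(hqeven s).eq t])

lemma IsTestFunction.exists_contDiff_comp_sq_of_even [CompleteSpace E] (hh : IsTestFunction h)
    (heven : ∀ s, Function.Even fun t => h (s, t)) :
    ∃ H : P × ℝ → E, ContDiff ℝ ∞ H ∧ ∀ s t, h (s, t) = H (s, t ^ 2) := by
  obtain ⟨k, hk⟩ := exists_isAlternatingKernel
  exact ⟨evenExt k h, contDiff_evenExt hk hh heven, fun s t => (evenExt_sq heven s t).symm⟩

lemma IsTestFunction.exists_contDiff_comp_sq_add_smul [CompleteSpace E] (hh : IsTestFunction h) :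
    ∃ A B : P × ℝ → E, ContDiff ℝ ∞ A ∧ ContDiff ℝ ∞ B ∧
      ∀ s t, h (s, t) = A (s, t ^ 2) + t • B (s, t ^ 2) := by
  have hrefl : IsTestFunction fun p : P × ℝ => h (p.1, -p.2) :=
    ⟨hh.contDiff.comp (by fun_prop), hh.hasCompactSupport.comp_homeomorph
      ((Homeomorph.refl P).prodCongr (Homeomorph.neg ℝ))⟩
  have heven := (hh.add hrefl).const_smul 2⁻¹
  have hodd := (hh.add (hrefl.const_smul (-1))).const_smul 2⁻¹
  obtain ⟨A, hA, hhA⟩ := heven.exists_contDiff_comp_sq_of_even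
    fun s t => by simp only [neg_neg, add_comm]
  obtain ⟨q, hq, hqeven, hhq⟩ := hodd.exists_even_of_odd
    fun s t => by simp only [neg_neg]; module
  obtain ⟨B, hB, hqB⟩ := hq.exists_contDiff_comp_sq_of_even hqeven
  refine ⟨A, B, hA, hB, fun s t => ?_⟩
  rw [← hhA, ← hqB, ← hhq]
  module

lemma exists_contDiff_eventuallyEq_comp_sq_add_smul [FiniteDimensional ℝ P] [CompleteSpace E]
    {U : Set (P × ℝ)} (hh : ContDiffOn ℝ ∞ h U) (hU : IsOpen U) {p : P × ℝ} (hp : p ∈ U) :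
    ∃ A B : P × ℝ → E, ContDiff ℝ ∞ A ∧ ContDiff ℝ ∞ B ∧
      h =ᶠ[𝓝 p] fun q => A (q.1, q.2 ^ 2) + q.2 • B (q.1, q.2 ^ 2) := by
  obtain ⟨g, hg, hgh⟩ := exists_isTestFunction_eventuallyEq hh hU hp
  obtain ⟨A, B, hA, hB, hAB⟩ := hg.exists_contDiff_comp_sq_add_smul
  exact ⟨A, B, hA, hB, hgh.symm.trans (.of_forall fun q => hAB q.1 q.2)⟩

end EvenFunctions

section LocalDiffeomorphisms

open scoped Manifold

variable {E : Type*} [NormedAddCommGroup E] [NormedSpace ℝ E]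

lemma isLocalDiffeoAt_iff_isLocalDiffeomorphAt {φ : E → E} {p : E} :
    IsLocalDiffeoAt φ p ↔ IsLocalDiffeomorphAt 𝓘(ℝ, E) 𝓘(ℝ, E) ∞ φ p := by
  constructor
  · rintro ⟨U, V, hU, hV, hp, rfl, hφ, ψ, hψ, hψφ, hφψ⟩
    refine ⟨{
      toFun := φ
      invFun := ψ
      source := U
      target := φ '' U
      map_source' := fun x hx => mem_image_of_mem φ hx
      map_target' := ?_
      left_inv' := hψφ
      right_inv' := hφψ
      open_source := hU
      open_target := hV
      contMDiffOn_toFun := hφ.contMDiffOn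
      contMDiffOn_invFun := hψ.contMDiffOn }, hp, eqOn_refl φ U⟩
    rintro _ ⟨x, hx, rfl⟩
    rwa [hψφ x hx]
  · rintro ⟨Φ, hp, hφ⟩
    exact ⟨Φ.source, Φ.target, Φ.open_source, Φ.open_target, hp,
      hφ.image_eq.trans Φ.toPartialEquiv.image_source_eq_target,
      (contMDiffOn_iff_contDiffOn.1 Φ.contMDiffOn_toFun).congr hφ, Φ.symm,
      contMDiffOn_iff_contDiffOn.1 Φ.contMDiffOn_invFun,
      fun x hx => by rw [hφ hx]; exact Φ.left_inv hx,
      fun y hy => (hφ (Φ.map_target hy)).trans (Φ.right_inv hy)⟩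

lemma IsLocalDiffeoAt.comp {ψ φ : E → E} {p : E} (hψ : IsLocalDiffeoAt ψ (φ p))
    (hφ : IsLocalDiffeoAt φ p) : IsLocalDiffeoAt (ψ ∘ φ) p := by
  rw [isLocalDiffeoAt_iff_isLocalDiffeomorphAt] at *
  exact hφ.comp _ _ hψ

lemma isLocalDiffeoAt_id (p : E) : IsLocalDiffeoAt id p :=
  ⟨univ, univ, isOpen_univ, isOpen_univ, mem_univ p, image_id univ, contDiffOn_id, id,
    contDiffOn_id, fun _ _ => rfl, fun _ _ => rfl⟩

lemma IsLocalDiffeoAt.exists_localInverse {φ : E → E} {p : E} (hφ : IsLocalDiffeoAt φ p) :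
    ∃ ψ : E → E, IsLocalDiffeoAt ψ (φ p) ∧ ∀ᶠ x in 𝓝 p, ψ (φ x) = x := by
  have hφ' := isLocalDiffeoAt_iff_isLocalDiffeomorphAt.1 hφ
  exact ⟨hφ'.localInverse,
    isLocalDiffeoAt_iff_isLocalDiffeomorphAt.2 hφ'.localInverse_isLocalDiffeomorphAt,
    hφ'.localInverse_eventuallyEq_left⟩

lemma IsLocalDiffeoAt.eventually {φ : E → E} {p : E} (hφ : IsLocalDiffeoAt φ p) :
    ∀ᶠ x in 𝓝 p, IsLocalDiffeoAt φ x := by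
  obtain ⟨U, V, hU, hV, hp, hφ⟩ := hφ
  filter_upwards [hU.mem_nhds hp] with x hx
  exact ⟨U, V, hU, hV, hx, hφ⟩

lemma IsLocalDiffeoAt.differentiableAt {φ : E → E} {p : E} (hφ : IsLocalDiffeoAt φ p) :
    DifferentiableAt ℝ φ p :=
  ((isLocalDiffeoAt_iff_isLocalDiffeomorphAt.1 hφ).mdifferentiableAt
    (by simp)).differentiableAt

lemma IsLocalDiffeoAt.injective_fderiv {φ : E → E} {p : E} (hφ : IsLocalDiffeoAt φ p) :
    Function.Injective (fderiv ℝ φ p) := by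
  have hφ' := isLocalDiffeoAt_iff_isLocalDiffeomorphAt.1 hφ
  have hcoe := hφ'.mfderivToContinuousLinearEquiv_coe (by simp)
  rw [mfderiv_eq_fderiv] at hcoe
  rw [← hcoe]
  exact (hφ'.mfderivToContinuousLinearEquiv (by simp)).injective

lemma isLocalDiffeoAt_of_isInvertible_fderiv [CompleteSpace E] {Ψ : E → E} {U : Set E}
    (hΨ : ContDiffOn ℝ ∞ Ψ U) (hU : IsOpen U) {x : E} (hx : x ∈ U)
    (hinv : (fderiv ℝ Ψ x).IsInvertible) : IsLocalDiffeoAt Ψ x := by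
  have hsmooth {y : E} (hy : y ∈ U) : ContDiffAt ℝ ∞ Ψ y := hΨ.contDiffAt (hU.mem_nhds hy)
  have hderiv {y : E} (hy : y ∈ U) {A : E ≃L[ℝ] E} (hA : A = fderiv ℝ Ψ y) :
      HasFDerivAt Ψ (A : E →L[ℝ] E) y :=
    hA ▸ ((hsmooth hy).differentiableAt (by simp)).hasFDerivAt
  obtain ⟨A, hA⟩ := hinv
  let e := (hsmooth hx).toOpenPartialHomeomorph Ψ (hderiv hx hA) (by simp)
  have hinvOpen : IsOpen (U ∩ fderiv ℝ Ψ ⁻¹' range ((↑) : (E ≃L[ℝ] E) → E →L[ℝ] E)) :=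
    (hΨ.continuousOn_fderiv_of_isOpen hU (by simp)).isOpen_inter_preimage hU
      ContinuousLinearEquiv.isOpen
  let S := e.source ∩ (U ∩ fderiv ℝ Ψ ⁻¹' range ((↑) : (E ≃L[ℝ] E) → E →L[ℝ] E))
  have hxS : x ∈ S := ⟨(hsmooth hx).mem_toOpenPartialHomeomorph_source (hderiv hx hA) (by simp),
    hx, A, hA⟩
  refine ⟨S, Ψ '' S, e.open_source.inter hinvOpen, e.isOpen_image_of_subset_source
    (e.open_source.inter hinvOpen) inter_subset_left, hxS, rfl,
    hΨ.mono fun y hy => hy.2.1, e.symm, ?_, fun y hy => e.left_inv hy.1, ?_⟩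
  · rintro _ ⟨y, ⟨hye, hyU, B, hB⟩, rfl⟩
    have hleft : e.symm (e y) = y := e.left_inv hye
    refine (e.contDiffAt_symm (f₀' := B) (e.map_source hye) ?_ ?_).contDiffWithinAt
    · rw [hleft]; exact hderiv hyU hB
    · rw [hleft]; exact hsmooth hyU
  · rintro _ ⟨y, hy, rfl⟩
    exact congrArg Ψ (e.left_inv hy.1)

end LocalDiffeomorphisms

section AEquivalence

variable {E F : Type*} [NormedAddCommGroup E] [NormedSpace ℝ E]
  [NormedAddCommGroup F] [NormedSpace ℝ F] {f g h : E → F} {p q r : E}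

lemma AEquivAt.trans (hfg : AEquivAt f p g q) (hgh : AEquivAt g q h r) : AEquivAt f p h r := by
  obtain ⟨φ, Φ, hφ, hΦ, rfl, hΦp, U, hU, hpU, hfg⟩ := hfg
  obtain ⟨ψ, Ψ, hψ, hΨ, rfl, hΨq, V, hV, hqV, hgh⟩ := hgh
  have hev : ∀ᶠ x in 𝓝 p, (Ψ ∘ Φ) (f x) = h ((ψ ∘ φ) x) := by
    filter_upwards [hU.mem_nhds hpU,
      hφ.differentiableAt.continuousAt.eventually (hV.mem_nhds hqV)] with x hxU hxV
    simp only [Function.comp_apply, hfg x hxU, hgh _ hxV]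
  obtain ⟨W, hW, hWopen, hpW⟩ := eventually_nhds_iff.1 hev
  exact ⟨ψ ∘ φ, Ψ ∘ Φ, hψ.comp hφ, (hΦp ▸ hΨ).comp hΦ, rfl, by simp [hΦp, hΨq], W, hWopen, hpW, hW⟩

lemma aEquivAt_of_eventuallyEq_comp_right {θ : E → E} (hθ : IsLocalDiffeoAt θ p)
    (hf : f =ᶠ[𝓝 p] g ∘ θ) : AEquivAt f p g (θ p) := by
  obtain ⟨U, hfU, hU, hpU⟩ := eventually_nhds_iff.1 hf
  exact ⟨θ, id, hθ, isLocalDiffeoAt_id _, rfl, hf.self_of_nhds, U, hU, hpU, hfU⟩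

lemma aEquivAt_of_eventuallyEq_comp_left {Ψ : F → F} (hΨ : IsLocalDiffeoAt Ψ (g p))
    (hg : ContinuousAt g p) (hf : f =ᶠ[𝓝 p] Ψ ∘ g) : AEquivAt f p g p := by
  obtain ⟨ψ, hψ, hψΨ⟩ := hΨ.exists_localInverse
  have hev : ∀ᶠ x in 𝓝 p, ψ (f x) = g x := by
    filter_upwards [hf, hg.eventually hψΨ] with x hfx hgx
    rwa [hfx]
  obtain ⟨U, hfU, hU, hpU⟩ := eventually_nhds_iff.1 hev
  exact ⟨id, ψ, isLocalDiffeoAt_id p, hf.self_of_nhds ▸ hψ, rfl, hev.self_of_nhds,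
    U, hU, hpU, hfU⟩

lemma AEquivAt.exists_fderiv_comp_eq (hfg : AEquivAt f p g q)
    (hf : ∀ᶠ x in 𝓝 p, DifferentiableAt ℝ f x) (hg : Differentiable ℝ g) :
    ∃ (φ : E → E) (Φ : F → F), φ p = q ∧ ∀ᶠ x in 𝓝 p, IsLocalDiffeoAt φ x ∧
      IsLocalDiffeoAt Φ (f x) ∧
      fderiv ℝ g (φ x) ∘L fderiv ℝ φ x = fderiv ℝ Φ (f x) ∘L fderiv ℝ f x := by
  obtain ⟨φ, Φ, hφ, hΦ, hφp, -, U, hU, hpU, hΦf⟩ := hfg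
  refine ⟨φ, Φ, hφp, ?_⟩
  have hfp : ContinuousAt f p := hf.self_of_nhds.continuousAt
  filter_upwards [hφ.eventually, hfp.eventually hΦ.eventually, hf, hU.mem_nhds hpU]
    with x hφx hΦx hfx hxU
  refine ⟨hφx, hΦx, ?_⟩
  have hgerm : Φ ∘ f =ᶠ[𝓝 x] g ∘ φ := by
    filter_upwards [hU.mem_nhds hxU] with y hy using hΦf y hy
  rw [← fderiv_comp x (hg _) hφx.differentiableAt, ← hgerm.fderiv_eq,
    fderiv_comp x hΦx.differentiableAt hfx]

end AEquivalence

section CuspidalEdges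

/-- The standard cuspidal edge. -/
def cuspidalEdge (q : ℝ × ℝ) : R3 := ![q.1, q.2 ^ 2, q.2 ^ 3]

lemma hasFDerivAt_cuspidalEdge (q : ℝ × ℝ) :
    HasFDerivAt cuspidalEdge (ContinuousLinearMap.pi
      ![ContinuousLinearMap.fst ℝ ℝ ℝ, (2 * q.2) • ContinuousLinearMap.snd ℝ ℝ ℝ,
        (3 * q.2 ^ 2) • ContinuousLinearMap.snd ℝ ℝ ℝ]) q := by
  have hsnd : HasFDerivAt Prod.snd (ContinuousLinearMap.snd ℝ ℝ ℝ) q := hasFDerivAt_snd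
  refine hasFDerivAt_pi.2 fun i => ?_
  fin_cases i
  · exact hasFDerivAt_fst
  · simpa using! hsnd.pow 2
  · simpa using! hsnd.pow 3

lemma differentiable_cuspidalEdge : Differentiable ℝ cuspidalEdge :=
  fun q => (hasFDerivAt_cuspidalEdge q).differentiableAt

lemma fderiv_cuspidalEdge_apply (q w : ℝ × ℝ) :
    fderiv ℝ cuspidalEdge q w = ![w.1, 2 * q.2 * w.2, 3 * q.2 ^ 2 * w.2] := by
  rw [(hasFDerivAt_cuspidalEdge q).fderiv]
  ext i
  fin_cases i <;> simp

lemma injective_fderiv_cuspidalEdge {q : ℝ × ℝ} (hq : q.2 ≠ 0) :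
    Function.Injective (fderiv ℝ cuspidalEdge q) := by
  intro v w hvw
  simp only [fderiv_cuspidalEdge_apply] at hvw
  refine Prod.ext (by simpa using congrFun hvw 0) ?_
  simpa [hq] using congrFun hvw 1

lemma IsCuspidalEdge.fderiv_apply_ne_zero {f : ℝ × ℝ → R3} {p : ℝ × ℝ} {τ : ℝ → ℝ × ℝ}
    {τ' : ℝ × ℝ} {u₀ : ℝ} (h : IsCuspidalEdge f p) (hf : ∀ᶠ x in 𝓝 p, DifferentiableAt ℝ f x)
    (hτ : HasDerivAt τ τ' u₀) (hτu₀ : τ u₀ = p) (hτ' : τ' ≠ 0)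
    (hsing : ∀ᶠ u in 𝓝 u₀, ¬ Function.Injective (fderiv ℝ f (τ u))) :
    fderiv ℝ f p τ' ≠ 0 := by
  subst hτu₀
  obtain ⟨φ, Φ, -, hφΦ⟩ :=
    AEquivAt.exists_fderiv_comp_eq (g := cuspidalEdge) h hf differentiable_cuspidalEdge
  obtain ⟨hφ, -, hcomp⟩ := hφΦ.self_of_nhds
  have hsnd : (fun u => (φ (τ u)).2) =ᶠ[𝓝 u₀] 0 := by
    filter_upwards [hsing, hτ.continuousAt.eventually hφΦ] with u hu ⟨hφu, _, hcompu⟩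
    contrapose! hu
    have hinj := (injective_fderiv_cuspidalEdge hu).comp hφu.injective_fderiv
    rw [← ContinuousLinearMap.coe_comp, hcompu, ContinuousLinearMap.coe_comp] at hinj
    exact hinj.of_comp
  have hφτ : HasDerivAt (fun u => (φ (τ u)).2) (fderiv ℝ φ (τ u₀) τ').2 u₀ :=
    (hφ.differentiableAt.hasFDerivAt.comp_hasDerivAt u₀ hτ).snd
  have hsnd' : (fderiv ℝ φ (τ u₀) τ').2 = 0 :=
    (hφτ.congr_of_eventuallyEq hsnd.symm).unique (hasDerivAt_const u₀ 0)
  intro hzero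
  have hfst := congrFun (DFunLike.congr_fun hcomp τ') 0
  simp only [ContinuousLinearMap.comp_apply, hzero, map_zero, fderiv_cuspidalEdge_apply,
    Matrix.cons_val_zero, Pi.zero_apply] at hfst
  exact hτ' (hφ.injective_fderiv (by rw [map_zero]; exact Prod.ext hfst hsnd'))

end CuspidalEdges

section Recognition

lemma linearIndependent_triangular {R M : Type*} [CommRing R] [NoZeroDivisors R] [AddCommGroup M]
    [Module R M] {x y z : M} {a b c : R} (h : LinearIndependent R ![x, y, z]) (ha : a ≠ 0)
    (hb : b ≠ 0) (hc : c ≠ 0) (p q r : R) :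
    LinearIndependent R ![a • x, p • x + b • y, q • x + r • y + c • z] := by
  rw [Fintype.linearIndependent_iff] at h ⊢
  intro s hs
  simp only [Fin.sum_univ_three, Matrix.cons_val] at hs
  have hcoeff := h ![s 0 * a + s 1 * p + s 2 * q, s 1 * b + s 2 * r, s 2 * c] (by
    simp only [Fin.sum_univ_three, Matrix.cons_val, ← hs]
    module)
  have h₂ : s 2 = 0 := (mul_eq_zero.1 (hcoeff 2)).resolve_right hc
  have h₁ : s 1 = 0 := by simpa [h₂, hb] using hcoeff 1
  have h₀ : s 0 = 0 := by simpa [h₁, h₂, ha] using hcoeff 0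
  intro i
  fin_cases i <;> assumption

lemma isInvertible_of_linearIndependent_comp_basis {𝕜 ι E F : Type*} [NontriviallyNormedField 𝕜]
    [CompleteSpace 𝕜] [Fintype ι] [NormedAddCommGroup E] [NormedSpace 𝕜 E]
    [NormedAddCommGroup F] [NormedSpace 𝕜 F] [FiniteDimensional 𝕜 F]
    (b : Module.Basis ι 𝕜 E) (hcard : Fintype.card ι = Module.finrank 𝕜 F) {T : E →L[𝕜] F}
    (hT : LinearIndependent 𝕜 (T ∘ b)) : T.IsInvertible := by
  have := b.finiteDimensional_of_finite
  let b' := basisOfLinearIndependentOfCardEqFinrank' (T ∘ b) hT hcard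
  refine ⟨(b.equiv b' (.refl ι)).toContinuousLinearEquiv, ContinuousLinearMap.coe_injective ?_⟩
  exact b.ext fun i => by simp [b']

lemma isCuspidalEdge_of_eventuallyEq_comp_sq_add_cube_smul {f A B : ℝ × ℝ → R3}
    (hA : ContDiff ℝ ∞ A) (hB : ContDiff ℝ ∞ B)
    (hind : LinearIndependent ℝ ![fderivFst A 0 1, derivSnd A 0, B 0])
    (hf : f =ᶠ[𝓝 0] fun q => A (q.1, q.2 ^ 2) + q.2 ^ 3 • B (q.1, q.2 ^ 2)) :
    IsCuspidalEdge f (0, 0) := by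
  let π : R3 →L[ℝ] ℝ × ℝ :=
    (ContinuousLinearMap.proj 0).prod (ContinuousLinearMap.proj 1)
  let Ψ : R3 → R3 := fun x => A (π x) + x 2 • B (π x)
  have hΨ : ContDiff ℝ ∞ Ψ := by fun_prop
  have hΨ' : HasFDerivAt Ψ (fderiv ℝ A 0 ∘L π +
      (ContinuousLinearMap.proj 2 : R3 →L[ℝ] ℝ).smulRight (B 0)) 0 := by
    have hπ : HasFDerivAt π π 0 := π.hasFDerivAt
    have hA' : HasFDerivAt A (fderiv ℝ A 0) (π 0) :=
      (map_zero π).symm ▸ (hA.differentiable (by simp) 0).hasFDerivAt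
    have hB' := (hB.differentiable (by simp) (π 0)).hasFDerivAt
    have hproj : HasFDerivAt (fun x : R3 => x 2) (ContinuousLinearMap.proj 2 : R3 →L[ℝ] ℝ) 0 :=
      hasFDerivAt_apply 2 0
    simpa [Ψ, Function.comp_def] using! (hA'.comp 0 hπ).add (hproj.smul (hB'.comp 0 hπ))
  have hinv : (fderiv ℝ Ψ 0).IsInvertible := by
    refine isInvertible_of_linearIndependent_comp_basis (Pi.basisFun ℝ (Fin 3)) (by simp) ?_
    convert! hind using 1
    ext i : 1
    fin_cases i <;> simp [hΨ'.fderiv, π, fderivFst, derivSnd, Prod.mk_zero_zero]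
  have h0 : cuspidalEdge (0, 0) = 0 := by simp [cuspidalEdge]
  exact aEquivAt_of_eventuallyEq_comp_left (Ψ := Ψ) (g := cuspidalEdge)
    (h0 ▸ isLocalDiffeoAt_of_isInvertible_fderiv hΨ.contDiffOn isOpen_univ (mem_univ _) hinv)
    (differentiable_cuspidalEdge _).continuousAt hf

end Recognition

section EvenOddSplitting

variable {E : Type*} [NormedAddCommGroup E] [NormedSpace ℝ E]

lemma hasDerivAt_comp_sq_add_smul {X Y : ℝ → E} {X' Y' : E} {t : ℝ}
    (hX : HasDerivAt X X' (t ^ 2)) (hY : HasDerivAt Y Y' (t ^ 2)) :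
    HasDerivAt (fun t => X (t ^ 2) + t • Y (t ^ 2))
      ((Y (t ^ 2) + (2 * t ^ 2) • Y') + t • (2 : ℝ) • X') t := by
  have hsq : HasDerivAt (fun t : ℝ => t ^ 2) (2 * t) t := by simpa using hasDerivAt_pow 2 t
  refine ((hX.scomp (h := fun t => t ^ 2) t hsq).add
    ((hasDerivAt_id t).smul (hY.scomp (h := fun t => t ^ 2) t hsq))).congr_deriv ?_
  simp only [id, Function.comp_apply]
  module

lemma deriv_eventuallyEq_of_eventuallyEq_comp_sq_add_smul {c X Y : ℝ → E}
    (hX : Differentiable ℝ X) (hY : Differentiable ℝ Y)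
    (hc : c =ᶠ[𝓝 0] fun t => X (t ^ 2) + t • Y (t ^ 2)) :
    deriv c =ᶠ[𝓝 0]
      fun t => (Y (t ^ 2) + (2 * t ^ 2) • deriv Y (t ^ 2)) + t • (2 : ℝ) • deriv X (t ^ 2) :=
  hc.deriv.trans <| .of_forall fun _ =>
    (hasDerivAt_comp_sq_add_smul (hX _).hasDerivAt (hY _).hasDerivAt).deriv

lemma hasDerivAt_mul_smul_zero {a : ℝ} {Z : ℝ → E} (hZ : DifferentiableAt ℝ Z 0) :
    HasDerivAt (fun y => (a * y) • Z y) (a • Z 0) 0 := by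
  simpa using! ((hasDerivAt_id (0 : ℝ)).const_mul a).smul hZ.hasDerivAt

lemma derivs_zero_of_eventuallyEq_comp_sq_add_smul {c X Y : ℝ → E} (hX : ContDiff ℝ ∞ X)
    (hY : ContDiff ℝ ∞ Y) (hc : c =ᶠ[𝓝 0] fun t => X (t ^ 2) + t • Y (t ^ 2)) :
    deriv c 0 = Y 0 ∧ deriv (deriv c) 0 = (2 : ℝ) • deriv X 0 ∧
      deriv (deriv (deriv c)) 0 = (6 : ℝ) • deriv Y 0 := by
  obtain ⟨hdX, hX'⟩ := contDiff_infty_iff_deriv.1 hX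
  obtain ⟨hdY, hY'⟩ := contDiff_infty_iff_deriv.1 hY
  have hX₁ : ContDiff ℝ ∞ fun y => Y y + (2 * y) • deriv Y y := by fun_prop
  have hY₁ : ContDiff ℝ ∞ fun y => (2 : ℝ) • deriv X y := by fun_prop
  obtain ⟨hdX₁, hX₁'⟩ := contDiff_infty_iff_deriv.1 hX₁
  obtain ⟨hdY₁, hY₁'⟩ := contDiff_infty_iff_deriv.1 hY₁
  have hX₁0 : deriv (fun y => Y y + (2 * y) • deriv Y y) 0 = (3 : ℝ) • deriv Y 0 := by
    refine (((hdY 0).hasDerivAt.add (hasDerivAt_mul_smul_zero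
      (hY'.differentiable (by simp) 0))).congr_deriv ?_).deriv
    module
  have hc₁ := deriv_eventuallyEq_of_eventuallyEq_comp_sq_add_smul hdX hdY hc
  have hc₂ := deriv_eventuallyEq_of_eventuallyEq_comp_sq_add_smul hdX₁ hdY₁ hc₁
  have hc₃ := deriv_eventuallyEq_of_eventuallyEq_comp_sq_add_smul
    (X := fun y => (2 : ℝ) • deriv X y + (2 * y) • deriv (fun y => (2 : ℝ) • deriv X y) y)
    (Y := fun y => (2 : ℝ) • deriv (fun y => Y y + (2 * y) • deriv Y y) y)
    (by fun_prop (disch := simp)) (by fun_prop (disch := simp)) hc₂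
  refine ⟨by simpa using hc₁.self_of_nhds, by simpa using hc₂.self_of_nhds, ?_⟩
  have hsix : (2 : ℝ) • (3 : ℝ) • deriv Y 0 = (6 : ℝ) • deriv Y 0 := by module
  simpa [hX₁0, hsix] using hc₃.self_of_nhds

lemma comp_add_sub_smul_deriv_eventuallyEq {c : ℝ → E} {A B : ℝ × ℝ → E} {u₀ : ℝ}
    (hA : Differentiable ℝ A) (hB : Differentiable ℝ B)
    (hc : (fun q : ℝ × ℝ => c (u₀ + q.1 + q.2)) =ᶠ[𝓝 0]
      fun q => A (q.1, q.2 ^ 2) + q.2 • B (q.1, q.2 ^ 2)) :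
    (fun q : ℝ × ℝ => c (u₀ + q.1 + q.2) - q.2 • deriv c (u₀ + q.1 + q.2)) =ᶠ[𝓝 0]
      fun q => (A (q.1, q.2 ^ 2) - (2 * q.2 ^ 2) • derivSnd A (q.1, q.2 ^ 2)) +
        q.2 ^ 3 • (-2 : ℝ) • derivSnd B (q.1, q.2 ^ 2) := by
  filter_upwards [hc, hc.eventually_nhds] with ⟨s, t⟩ hq hnhds
  have hline : (fun x => c (u₀ + s + x)) =ᶠ[𝓝 t] fun x => A (s, x ^ 2) + x • B (s, x ^ 2) :=
    (Continuous.prodMk_right s).continuousAt.eventually hnhds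
  have hderiv := hline.deriv_eq
  rw [deriv_comp_const_add, (hasDerivAt_comp_sq_add_smul (hasDerivAt_prodMk_snd (hA _))
    (hasDerivAt_prodMk_snd (hB _))).deriv] at hderiv
  simp only at hq ⊢
  rw [hq, hderiv]
  module

lemma derivs_of_comp_add_eventuallyEq_comp_sq_add_smul {c : ℝ → E} {A B : ℝ × ℝ → E} {u₀ : ℝ}
    (hA : ContDiff ℝ ∞ A) (hB : ContDiff ℝ ∞ B)
    (hc : (fun q : ℝ × ℝ => c (u₀ + q.1 + q.2)) =ᶠ[𝓝 0]
      fun q => A (q.1, q.2 ^ 2) + q.2 • B (q.1, q.2 ^ 2)) :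
    deriv c u₀ = fderivFst A 0 1 ∧ deriv (deriv c) u₀ = (2 : ℝ) • derivSnd A 0 ∧
      deriv (deriv (deriv c)) u₀ = (6 : ℝ) • derivSnd B 0 := by
  have hdA := hA.differentiable (by simp)
  have hdB := hB.differentiable (by simp)
  have hfst : (fun s => c (u₀ + s)) =ᶠ[𝓝 0] fun s => A (s, 0) := by
    filter_upwards [(Continuous.prodMk_left (0 : ℝ)).continuousAt.eventually hc] with s hs
    simpa using hs
  have hfst' : HasDerivAt (fun s => A (s, 0)) (fderivFst A 0 1) 0 :=
    (hasFDerivAt_prodMk_fst (hdA (0, 0))).hasDerivAt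
  have hc₁ := hfst.deriv_eq.trans hfst'.deriv
  have hsnd : (fun t => c (u₀ + t)) =ᶠ[𝓝 0] fun t => A (0, t ^ 2) + t • B (0, t ^ 2) := by
    simpa using! (Continuous.prodMk_right (0 : ℝ)).continuousAt.eventually hc
  obtain ⟨-, hc₂, hc₃⟩ := derivs_zero_of_eventuallyEq_comp_sq_add_smul (X := fun y => A (0, y))
    (Y := fun y => B (0, y)) (by fun_prop) (by fun_prop) hsnd
  rw [(hasDerivAt_prodMk_snd (hdA (0, 0))).deriv] at hc₂
  rw [(hasDerivAt_prodMk_snd (hdB (0, 0))).deriv] at hc₃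
  have hshift (x : ℝ → E) : deriv (fun t => x (u₀ + t)) = fun t => deriv x (u₀ + t) :=
    funext fun t => deriv_comp_const_add x u₀ t
  simp only [hshift, add_zero] at hc₁ hc₂ hc₃
  exact ⟨hc₁, hc₂, hc₃⟩

lemma hasFDerivAt_sub_smul_derivSnd_zero {A : ℝ × ℝ → E} (hA : ContDiff ℝ ∞ A) :
    HasFDerivAt (fun p => A p - (2 * p.2) • derivSnd A p)
      (fderiv ℝ A 0 - ((2 : ℝ) • ContinuousLinearMap.snd ℝ ℝ ℝ).smulRight (derivSnd A 0)) 0 := by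
  have hsnd : HasFDerivAt (fun p : ℝ × ℝ => 2 * p.2) ((2 : ℝ) • ContinuousLinearMap.snd ℝ ℝ ℝ) 0 :=
    hasFDerivAt_snd.const_mul 2
  have hA₂ := ((contDiff_derivSnd hA).differentiable (by simp) 0).hasFDerivAt
  simpa using! (hA.differentiable (by simp) 0).hasFDerivAt.sub (hsnd.smul hA₂)

end EvenOddSplitting

section RuledSurfaces

/-- The ruled surface with base curve `γ` and director curve `L`. -/
def ruledSurface {E : Type*} [AddCommGroup E] [Module ℝ E] (γ L : ℝ → E) (q : ℝ × ℝ) : E :=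
  γ q.1 + q.2 • L q.1

lemma isLocalDiffeoAt_of_invOn {E : Type*} [NormedAddCommGroup E] [NormedSpace ℝ E]
    {φ ψ : E → E} {U V : Set E} {p : E} (hU : IsOpen U) (hV : IsOpen V) (hp : p ∈ U)
    (hφ : ContDiffOn ℝ ∞ φ U) (hψ : ContDiffOn ℝ ∞ ψ V) (hUV : MapsTo φ U V)
    (hVU : MapsTo ψ V U) (hinv : InvOn ψ φ U V) : IsLocalDiffeoAt φ p :=
  ⟨U, V, hU, hV, hp, (hinv.bijOn hUV hVU).image_eq, hφ, ψ, hψ, hinv.1, hinv.2⟩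

lemma isCuspidalEdge_comp_add_sub_smul_deriv {c : ℝ → R3} {I : Set ℝ} {u₀ : ℝ}
    (hc : ContDiffOn ℝ ∞ c I) (hI : IsOpen I) (hu₀ : u₀ ∈ I)
    (hind : LinearIndependent ℝ ![deriv c u₀, deriv (deriv c) u₀, deriv (deriv (deriv c)) u₀]) :
    IsCuspidalEdge (fun q : ℝ × ℝ => c (u₀ + q.1 + q.2) - q.2 • deriv c (u₀ + q.1 + q.2))
      (0, 0) := by
  have hadd : Continuous fun q : ℝ × ℝ => u₀ + q.1 + q.2 := by fun_prop
  obtain ⟨A, B, hA, hB, hAB⟩ := exists_contDiff_eventuallyEq_comp_sq_add_smul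
    (h := fun q : ℝ × ℝ => c (u₀ + q.1 + q.2)) (p := 0)
    (hc.comp (by fun_prop) (mapsTo_preimage _ I)) (hI.preimage hadd) (by simpa using hu₀)
  have hdA := hA.differentiable (by simp)
  have hdB := hB.differentiable (by simp)
  have hA' : ContDiff ℝ ∞ fun p : ℝ × ℝ => A p - (2 * p.2) • derivSnd A p := by
    have := contDiff_derivSnd hA
    fun_prop
  have hB' : ContDiff ℝ ∞ fun p : ℝ × ℝ => (-2 : ℝ) • derivSnd B p :=
    (contDiff_derivSnd hB).const_smul (-2 : ℝ)
  obtain ⟨hc₁, hc₂, hc₃⟩ := derivs_of_comp_add_eventuallyEq_comp_sq_add_smul hA hB hAB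
  refine isCuspidalEdge_of_eventuallyEq_comp_sq_add_cube_smul hA' hB' ?_
    (comp_add_sub_smul_deriv_eventuallyEq hdA hdB hAB)
  have h₁ : fderivFst (fun p : ℝ × ℝ => A p - (2 * p.2) • derivSnd A p) 0 1 = deriv c u₀ := by
    rw [fderivFst, (hasFDerivAt_sub_smul_derivSnd_zero hA).fderiv, hc₁]
    simp [fderivFst]
  have h₂ : derivSnd (fun p : ℝ × ℝ => A p - (2 * p.2) • derivSnd A p) 0 =
      (-1 / 2 : ℝ) • deriv (deriv c) u₀ := by
    rw [derivSnd, (hasFDerivAt_sub_smul_derivSnd_zero hA).fderiv, hc₂]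
    simp only [sub_apply, ContinuousLinearMap.smulRight_apply, smul_apply,
      ContinuousLinearMap.coe_snd', derivSnd]
    module
  have h₃ : (-2 : ℝ) • derivSnd B 0 = (-1 / 3 : ℝ) • deriv (deriv (deriv c)) u₀ := by
    rw [hc₃]
    module
  rw [h₁, h₂, h₃]
  simpa using linearIndependent_triangular hind one_ne_zero (by norm_num : (-1 / 2 : ℝ) ≠ 0)
    (by norm_num : (-1 / 3 : ℝ) ≠ 0) 0 0 0

lemma isCuspidalEdge_tangentDevelopable {c : ℝ → R3} {I : Set ℝ} {u₀ : ℝ}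
    (hc : ContDiffOn ℝ ∞ c I) (hI : IsOpen I) (hu₀ : u₀ ∈ I)
    (hind : LinearIndependent ℝ ![deriv c u₀, deriv (deriv c) u₀, deriv (deriv (deriv c)) u₀]) :
    IsCuspidalEdge (ruledSurface c (deriv c)) (u₀, 0) := by
  let θ : ℝ × ℝ → ℝ × ℝ := fun q => (q.1 - u₀ + q.2, -q.2)
  have hθ : IsLocalDiffeoAt θ (u₀, 0) := by
    refine isLocalDiffeoAt_of_invOn (ψ := fun q => (u₀ + q.1 + q.2, -q.2)) isOpen_univ
      isOpen_univ (mem_univ _) (by fun_prop) (by fun_prop) (mapsTo_univ _ _) (mapsTo_univ _ _)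
      ⟨fun q _ => ?_, fun q _ => ?_⟩ <;> ext <;> simp only [θ] <;> ring
  have hθu₀ : θ (u₀, 0) = (0, 0) := by simp [θ]
  refine (hθu₀ ▸ aEquivAt_of_eventuallyEq_comp_right hθ (.of_forall fun q => ?_)).trans
    (isCuspidalEdge_comp_add_sub_smul_deriv hc hI hu₀ hind)
  have hq : u₀ + (q.1 - u₀ + q.2) + -q.2 = q.1 := by ring
  simp [ruledSurface, θ, hq]

lemma isLocalDiffeoAt_shear {I : Set ℝ} {β κ : ℝ → ℝ} {u₀ v₀ : ℝ} (hI : IsOpen I)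
    (hβ : ContDiffOn ℝ ∞ β I) (hκ : ContDiffOn ℝ ∞ κ I) (hκ0 : ∀ u ∈ I, κ u ≠ 0) (hu₀ : u₀ ∈ I) :
    IsLocalDiffeoAt (fun q : ℝ × ℝ => (q.1, (q.2 - β q.1) / κ q.1)) (u₀, v₀) := by
  have hfst : MapsTo (Prod.fst : ℝ × ℝ → ℝ) (Prod.fst ⁻¹' I) I := mapsTo_preimage _ I
  have hβ' := hβ.comp contDiffOn_fst hfst
  have hκ' := hκ.comp contDiffOn_fst hfst
  have hopen : IsOpen (Prod.fst ⁻¹' I : Set (ℝ × ℝ)) := hI.preimage continuous_fst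
  refine isLocalDiffeoAt_of_invOn (ψ := fun q => (q.1, β q.1 + q.2 * κ q.1)) hopen hopen hu₀
    (contDiffOn_fst.prodMk ((contDiffOn_snd.sub hβ').div hκ' fun q hq => hκ0 q.1 hq))
    (contDiffOn_fst.prodMk (hβ'.add (contDiffOn_snd.mul hκ'))) hfst hfst
    ⟨fun q hq => ?_, fun q hq => ?_⟩ <;> have := hκ0 q.1 hq <;> ext <;> simp only <;>
    field_simp <;> ring

section Developables

lemma hasDerivAt_deriv_of_contDiffOn {𝕜 F : Type*} [NontriviallyNormedField 𝕜]
    [NormedAddCommGroup F] [NormedSpace 𝕜 F] {n : WithTop ℕ∞} {x : 𝕜 → F} {s : Set 𝕜} {u : 𝕜}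
    (hx : ContDiffOn 𝕜 n x s) (hn : n ≠ 0) (hs : IsOpen s) (hu : u ∈ s) :
    HasDerivAt x (deriv x u) u :=
  ((hx.contDiffAt (hs.mem_nhds hu)).differentiableAt hn).hasDerivAt

variable {γ L : ℝ → R3} {β κ : ℝ → ℝ} {I : Set ℝ} {u₀ : ℝ}

lemma linearIndependent_derivs_of_deriv_eqOn_smul {c : ℝ → R3} (hL : ContDiffOn ℝ ∞ L I)
    (hκ : ContDiffOn ℝ ∞ κ I) (hI : IsOpen I) (hu₀ : u₀ ∈ I)
    (hc : EqOn (deriv c) (fun u => κ u • L u) I) (hκ0 : κ u₀ ≠ 0)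
    (hind : LinearIndependent ℝ ![L u₀, deriv L u₀, deriv (deriv L) u₀]) :
    LinearIndependent ℝ ![deriv c u₀, deriv (deriv c) u₀, deriv (deriv (deriv c)) u₀] := by
  have hL' := hL.deriv_of_isOpen hI (m := ∞) (by simp)
  have hκ' := hκ.deriv_of_isOpen hI (m := ∞) (by simp)
  have hsmul {k : ℝ → ℝ} {x : ℝ → R3} {u : ℝ} (hk : ContDiffOn ℝ ∞ k I)
      (hx : ContDiffOn ℝ ∞ x I) (hu : u ∈ I) :
      HasDerivAt (fun u => k u • x u) (deriv k u • x u + k u • deriv x u) u :=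
    ((hasDerivAt_deriv_of_contDiffOn hk (by simp) hI hu).smul
      (hasDerivAt_deriv_of_contDiffOn hx (by simp) hI hu)).congr_deriv (add_comm _ _)
  have hc₂ : EqOn (deriv (deriv c)) (fun u => deriv κ u • L u + κ u • deriv L u) I :=
    fun u hu => (hc.deriv hI hu).trans (hsmul hκ hL hu).deriv
  have hc₃ : deriv (deriv (deriv c)) u₀ = deriv (deriv κ) u₀ • L u₀ +
      (2 * deriv κ u₀) • deriv L u₀ + κ u₀ • deriv (deriv L) u₀ := by
    refine (hc₂.deriv hI hu₀).trans
      (((hsmul hκ' hL hu₀).add (hsmul hκ hL' hu₀)).congr_deriv ?_).deriv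
    module
  rw [hc hu₀, hc₂ hu₀, hc₃]
  exact linearIndependent_triangular hind hκ0 hκ0 hκ0 _ _ _

lemma isCuspidalEdge_ruledSurface (hγ : ContDiffOn ℝ ∞ γ I) (hL : ContDiffOn ℝ ∞ L I)
    (hβ : ContDiffOn ℝ ∞ β I) (hκ : ContDiffOn ℝ ∞ κ I) (hI : IsOpen I) (hu₀ : u₀ ∈ I)
    (hc : ∀ u ∈ I, HasDerivAt (fun u => γ u + β u • L u) (κ u • L u) u) (hκ0 : κ u₀ ≠ 0)
    (hind : LinearIndependent ℝ ![L u₀, deriv L u₀, deriv (deriv L) u₀]) :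
    IsCuspidalEdge (ruledSurface γ L) (u₀, β u₀) := by
  let c : ℝ → R3 := fun u => γ u + β u • L u
  have hcI : ContDiffOn ℝ ∞ c I := hγ.add (hβ.smul hL)
  have hcJ : EqOn (deriv c) (fun u => κ u • L u) I := fun u hu => (hc u hu).deriv
  have hJ : IsOpen (I ∩ {u | κ u ≠ 0}) := hκ.continuousOn.isOpen_inter_preimage hI isOpen_ne
  let θ : ℝ × ℝ → ℝ × ℝ := fun q => (q.1, (q.2 - β q.1) / κ q.1)
  have hθ : IsLocalDiffeoAt θ (u₀, β u₀) :=
    isLocalDiffeoAt_shear hJ (hβ.mono inter_subset_left) (hκ.mono inter_subset_left)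
      (fun u hu => hu.2) ⟨hu₀, hκ0⟩
  have hθu₀ : θ (u₀, β u₀) = (u₀, 0) := by simp [θ]
  have hfθ : ruledSurface γ L =ᶠ[𝓝 (u₀, β u₀)] ruledSurface c (deriv c) ∘ θ := by
    filter_upwards [continuousAt_fst.preimage_mem_nhds (hJ.mem_nhds ⟨hu₀, hκ0⟩)] with q ⟨hqI, hq0⟩
    simp only [ruledSurface, Function.comp_apply, θ, c, hcJ hqI, smul_smul, div_mul_cancel₀ _ hq0]
    module
  exact (hθu₀ ▸ aEquivAt_of_eventuallyEq_comp_right hθ hfθ).trans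
    (isCuspidalEdge_tangentDevelopable hcI hI hu₀
      (linearIndependent_derivs_of_deriv_eqOn_smul hL hκ hI hu₀ hcJ hκ0 hind))

lemma not_isCuspidalEdge_ruledSurface (hγ : ContDiffOn ℝ ∞ γ I) (hL : ContDiffOn ℝ ∞ L I)
    (hβ : DifferentiableOn ℝ β I) (hI : IsOpen I) (hu₀ : u₀ ∈ I)
    (hc : ∀ u ∈ I, HasDerivAt (fun u => γ u + β u • L u) (κ u • L u) u) (hκ0 : κ u₀ = 0) :
    ¬ IsCuspidalEdge (ruledSurface γ L) (u₀, β u₀) := by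
  have hf {q : ℝ × ℝ} (hq : q.1 ∈ I) : DifferentiableAt ℝ (ruledSurface γ L) q := by
    have hγq := (hasDerivAt_deriv_of_contDiffOn hγ (by simp) hI hq).differentiableAt
    have hLq := (hasDerivAt_deriv_of_contDiffOn hL (by simp) hI hq).differentiableAt
    unfold ruledSurface
    fun_prop
  have hτ {u : ℝ} (hu : u ∈ I) : HasDerivAt (fun u => (u, β u)) ((1, deriv β u) : ℝ × ℝ) u :=
    (hasDerivAt_id u).prodMk (hβ.differentiableAt (hI.mem_nhds hu)).hasDerivAt
  have hcurve {u : ℝ} (hu : u ∈ I) :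
      fderiv ℝ (ruledSurface γ L) (u, β u) (1, deriv β u) = κ u • L u :=
    ((hf hu).hasFDerivAt.comp_hasDerivAt u (hτ hu)).unique (hc u hu)
  have hruling {u : ℝ} (hu : u ∈ I) : fderiv ℝ (ruledSurface γ L) (u, β u) (0, 1) = L u := by
    refine (hasDerivAt_prodMk_snd (hf hu)).unique ?_
    simpa [ruledSurface] using! ((hasDerivAt_id (β u)).smul_const (L u)).const_add (γ u)
  refine fun h => h.fderiv_apply_ne_zero
    (mem_of_superset (continuousAt_fst.preimage_mem_nhds (hI.mem_nhds hu₀)) fun _ => hf) (hτ hu₀)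
    rfl (by simp) ?_ (by rw [hcurve hu₀, hκ0, zero_smul])
  filter_upwards [hI.mem_nhds hu₀] with u hu hinj
  have hker : fderiv ℝ (ruledSurface γ L) (u, β u) (1, deriv β u - κ u) = 0 := by
    have hsplit : ((1, deriv β u - κ u) : ℝ × ℝ) = (1, deriv β u) - κ u • (0, 1) := by simp
    rw [hsplit, map_sub, map_smul, hcurve hu, hruling hu, sub_self]
  simpa using hinj (hker.trans (map_zero _).symm)

end Developables

end RuledSurfaces

section LightlikeFrames

lemma mink_comm (x y : R3) : mink x y = mink y x := by simp only [mink]; ring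

lemma mink_add_left (x y z : R3) : mink (x + y) z = mink x z + mink y z := by
  simp only [mink, Pi.add_apply]; ring

lemma mink_smul_left (r : ℝ) (x y : R3) : mink (r • x) y = r * mink x y := by
  simp only [mink, Pi.smul_apply, smul_eq_mul]; ring

lemma hasDerivAt_mink {x y : ℝ → R3} {x' y' : R3} {u : ℝ} (hx : HasDerivAt x x' u)
    (hy : HasDerivAt y y' u) :
    HasDerivAt (fun u => mink (x u) (y u)) (mink x' (y u) + mink (x u) y') u := by
  rw [hasDerivAt_pi] at hx hy
  refine (((((hx 0).mul (hy 0)).neg).add ((hx 1).mul (hy 1))).add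
    ((hx 2).mul (hy 2))).congr_deriv ?_
  simp only [mink]
  ring

lemma contDiffOn_mink {x y : ℝ → R3} {I : Set ℝ} (hx : ContDiffOn ℝ ∞ x I)
    (hy : ContDiffOn ℝ ∞ y I) : ContDiffOn ℝ ∞ (fun u => mink (x u) (y u)) I := by
  rw [contDiffOn_pi] at hx hy
  exact ((((hx 0).mul (hy 0)).neg).add ((hx 1).mul (hy 1))).add ((hx 2).mul (hy 2))

lemma mink_deriv_add_mink_deriv {x y : ℝ → R3} {I : Set ℝ} {a u : ℝ} (hx : ContDiffOn ℝ ∞ x I)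
    (hy : ContDiffOn ℝ ∞ y I) (hI : IsOpen I) (hu : u ∈ I) (hxy : ∀ u ∈ I, mink (x u) (y u) = a) :
    mink (deriv x u) (y u) + mink (x u) (deriv y u) = 0 := by
  have hconst : (fun u => mink (x u) (y u)) =ᶠ[𝓝 u] fun _ => a :=
    eventually_of_mem (hI.mem_nhds hu) hxy
  exact (hasDerivAt_mink (hasDerivAt_deriv_of_contDiffOn hx (by simp) hI hu)
    (hasDerivAt_deriv_of_contDiffOn hy (by simp) hI hu)).unique
    ((hasDerivAt_const u a).congr_of_eventuallyEq hconst)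

namespace LightlikeFrame

variable {I : Set ℝ} {γ L N : ℝ → R3} {u : ℝ}

lemma linearIndependent (h : LightlikeFrame I γ L N) (hu : u ∈ I) :
    LinearIndependent ℝ ![L u, deriv γ u, N u] := by
  rw [Fintype.linearIndependent_iff]
  intro s hs
  simp only [Fin.sum_univ_three, Matrix.cons_val] at hs
  have hpair (w : R3) :
      s 0 * mink (L u) w + s 1 * mink (deriv γ u) w + s 2 * mink (N u) w = 0 := by
    simp only [← mink_smul_left, ← mink_add_left, hs]
    simp [mink]
  have hN := hpair (N u)
  have he := hpair (deriv γ u)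
  have hL := hpair (L u)
  simp only [h.unit_speed u hu, h.eL u hu, h.eN u hu, h.LL u hu, h.NN u hu, h.LN u hu,
    mink_comm (L u) (deriv γ u), mink_comm (N u) (deriv γ u), mink_comm (N u) (L u)] at hN he hL
  have h₀ : s 0 = 0 := by linarith
  have h₁ : s 1 = 0 := by linarith
  have h₂ : s 2 = 0 := by linarith
  intro i
  fin_cases i <;> assumption

lemma eq_add_add (h : LightlikeFrame I γ L N) (hu : u ∈ I) (x : R3) :
    x = mink x (N u) • L u + mink x (deriv γ u) • deriv γ u + mink x (L u) • N u := by
  have hspan := (h.linearIndependent hu).span_eq_top_of_card_eq_finrank' (by simp)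
  obtain ⟨s, rfl⟩ := (Submodule.mem_span_range_iff_exists_fun ℝ).1
    (hspan ▸ Submodule.mem_top : x ∈ Submodule.span ℝ (range ![L u, deriv γ u, N u]))
  simp only [Fin.sum_univ_three, Matrix.cons_val, mink_add_left, mink_smul_left,
    h.unit_speed u hu, h.eL u hu, h.eN u hu, h.LL u hu, h.NN u hu, h.LN u hu,
    mink_comm (L u) (deriv γ u), mink_comm (N u) (deriv γ u), mink_comm (N u) (L u)]
  module

lemma contDiffOn_deriv (h : LightlikeFrame I γ L N) (hI : IsOpen I) :
    ContDiffOn ℝ ∞ (deriv γ) I :=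
  h.smooth_gamma.deriv_of_isOpen hI (by simp)

lemma contDiffOn_alphaL (h : LightlikeFrame I γ L N) (hI : IsOpen I) :
    ContDiffOn ℝ ∞ (alphaL γ L) I :=
  contDiffOn_mink ((h.contDiffOn_deriv hI).deriv_of_isOpen hI (by simp)) h.smooth_L

lemma contDiffOn_alphaG (h : LightlikeFrame I γ L N) (hI : IsOpen I) :
    ContDiffOn ℝ ∞ (alphaG L N) I :=
  contDiffOn_mink h.smooth_L (h.smooth_N.deriv_of_isOpen hI (by simp))

lemma contDiffOn_sigmaL (h : LightlikeFrame I γ L N) (hI : IsOpen I) :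
    ContDiffOn ℝ ∞ (sigmaL γ L N) I :=
  ((h.contDiffOn_alphaL hI).deriv_of_isOpen hI (by simp)).add
    ((h.contDiffOn_alphaL hI).mul (h.contDiffOn_alphaG hI))

lemma deriv_L (h : LightlikeFrame I γ L N) (hI : IsOpen I) (hu : u ∈ I) :
    deriv L u = -alphaG L N u • L u - alphaL γ L u • deriv γ u := by
  have hLN := mink_deriv_add_mink_deriv h.smooth_L h.smooth_N hI hu h.LN
  have heL := mink_deriv_add_mink_deriv (h.contDiffOn_deriv hI) h.smooth_L hI hu h.eL
  have hLL := mink_deriv_add_mink_deriv h.smooth_L h.smooth_L hI hu h.LL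
  rw [mink_comm (L u)] at hLL
  rw [h.eq_add_add hu (deriv L u), mink_comm (deriv L u) (deriv γ u), alphaG, alphaL,
    eq_neg_of_add_eq_zero_left hLN, eq_neg_of_add_eq_zero_right heL, add_self_eq_zero.1 hLL]
  module

lemma hasDerivAt_add_inv_alphaL_smul (h : LightlikeFrame I γ L N) (hI : IsOpen I) (hu : u ∈ I)
    (hα : alphaL γ L u ≠ 0) :
    HasDerivAt (fun u => γ u + (1 / alphaL γ L u) • L u)
      ((-sigmaL γ L N u / alphaL γ L u ^ 2) • L u) u := by
  have hγ' := hasDerivAt_deriv_of_contDiffOn h.smooth_gamma (by simp) hI hu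
  have hL' := hasDerivAt_deriv_of_contDiffOn h.smooth_L (by simp) hI hu
  have hα' := hasDerivAt_deriv_of_contDiffOn (h.contDiffOn_alphaL hI) (by simp) hI hu
  have hinv : HasDerivAt (fun u => 1 / alphaL γ L u)
      (-deriv (alphaL γ L) u / alphaL γ L u ^ 2) u := by
    simpa using! hα'.inv hα
  refine (hγ'.add (hinv.smul hL')).congr_deriv ?_
  rw [h.deriv_L hI hu, sigmaL]
  match_scalars <;> field_simp <;> ring

lemma linearIndependent_L_deriv_deriv (h : LightlikeFrame I γ L N) (hI : IsOpen I) (hu : u ∈ I)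
    (hα : alphaL γ L u ≠ 0) :
    LinearIndependent ℝ ![L u, deriv γ u, deriv (deriv γ) u] := by
  have he := h.contDiffOn_deriv hI
  have hee := mink_deriv_add_mink_deriv he he hI hu h.unit_speed
  rw [mink_comm (deriv γ u)] at hee
  have he' : deriv (deriv γ) u = mink (deriv (deriv γ) u) (N u) • L u + (0 : ℝ) • deriv γ u +
      alphaL γ L u • N u := by
    rw [← add_self_eq_zero.1 hee]
    exact h.eq_add_add hu _
  rw [he']
  simpa using linearIndependent_triangular (h.linearIndependent hu) one_ne_zero one_ne_zero hα 0
    (mink (deriv (deriv γ) u) (N u)) 0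

lemma linearIndependent_derivs_L (h : LightlikeFrame I γ L N) (hI : IsOpen I) (hu : u ∈ I)
    (hα : alphaL γ L u ≠ 0) :
    LinearIndependent ℝ ![L u, deriv L u, deriv (deriv L) u] := by
  have hG' := hasDerivAt_deriv_of_contDiffOn (h.contDiffOn_alphaG hI) (by simp) hI hu
  have hα' := hasDerivAt_deriv_of_contDiffOn (h.contDiffOn_alphaL hI) (by simp) hI hu
  have he' := hasDerivAt_deriv_of_contDiffOn (h.contDiffOn_deriv hI) (by simp) hI hu
  have hL₁ := hasDerivAt_deriv_of_contDiffOn h.smooth_L (by simp) hI hu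
  have hL' : EqOn (deriv L) (fun u => -alphaG L N u • L u - alphaL γ L u • deriv γ u) I :=
    fun u hu => h.deriv_L hI hu
  have hL'' : deriv (deriv L) u = (alphaG L N u ^ 2 - deriv (alphaG L N) u) • L u +
      (alphaG L N u * alphaL γ L u - deriv (alphaL γ L) u) • deriv γ u +
      -alphaL γ L u • deriv (deriv γ) u := by
    refine (hL'.deriv hI hu).trans
      (((hG'.neg.smul hL₁).sub (hα'.smul he')).congr_deriv ?_).deriv
    rw [h.deriv_L hI hu]
    simp only [Pi.neg_apply]
    module
  rw [h.deriv_L hI hu, hL'', sub_eq_add_neg, ← neg_smul]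
  simpa using linearIndependent_triangular (h.linearIndependent_L_deriv_deriv hI hu hα)
    one_ne_zero (neg_ne_zero.2 hα) (neg_ne_zero.2 hα) (-alphaG L N u)
    (alphaG L N u ^ 2 - deriv (alphaG L N) u) (alphaG L N u * alphaL γ L u - deriv (alphaL γ L) u)

lemma isCuspidalEdge_ruledSurface_iff (h : LightlikeFrame I γ L N) (hI : IsOpen I) (hu : u ∈ I)
    (hα : alphaL γ L u ≠ 0) :
    IsCuspidalEdge (ruledSurface γ L) (u, 1 / alphaL γ L u) ↔ sigmaL γ L N u ≠ 0 := by
  let J := I ∩ {u | alphaL γ L u ≠ 0}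
  have hJI : J ⊆ I := inter_subset_left
  have hαI := h.contDiffOn_alphaL hI
  have hJ : IsOpen J := hαI.continuousOn.isOpen_inter_preimage hI isOpen_ne
  have hβ : ContDiffOn ℝ ∞ (fun u => 1 / alphaL γ L u) J :=
    contDiffOn_const.div (hαI.mono hJI) fun u hu => hu.2
  have hκ : ContDiffOn ℝ ∞ (fun u => -sigmaL γ L N u / alphaL γ L u ^ 2) J :=
    ((h.contDiffOn_sigmaL hI).mono hJI).neg.div ((hαI.mono hJI).pow 2)
      fun u hu => pow_ne_zero 2 hu.2
  have hc : ∀ u ∈ J, HasDerivAt (fun u => γ u + (1 / alphaL γ L u) • L u)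
      ((-sigmaL γ L N u / alphaL γ L u ^ 2) • L u) u :=
    fun u hu => h.hasDerivAt_add_inv_alphaL_smul hI hu.1 hu.2
  refine ⟨fun hedge hσ => ?_, fun hσ => ?_⟩
  · exact not_isCuspidalEdge_ruledSurface (h.smooth_gamma.mono hJI) (h.smooth_L.mono hJI)
      (hβ.differentiableOn (by simp)) hJ ⟨hu, hα⟩ hc (by simp [hσ]) hedge
  · exact isCuspidalEdge_ruledSurface (h.smooth_gamma.mono hJI) (h.smooth_L.mono hJI) hβ hκ hJ
      ⟨hu, hα⟩ hc (div_ne_zero (neg_ne_zero.2 hσ) (pow_ne_zero 2 hα))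
      (h.linearIndependent_derivs_L hI hu hα)

lemma swap (h : LightlikeFrame I γ L N) : LightlikeFrame I γ N L :=
  ⟨h.smooth_gamma, h.smooth_N, h.smooth_L, h.unit_speed, h.eN, h.eL, h.NN, h.LL,
    fun u hu => (mink_comm _ _).trans (h.LN u hu)⟩

lemma sigmaL_swap (h : LightlikeFrame I γ L N) (hI : IsOpen I) (hu : u ∈ I) :
    sigmaL γ N L u = sigmaN γ L N u := by
  have hLN := mink_deriv_add_mink_deriv h.smooth_L h.smooth_N hI hu h.LN
  have hG : alphaG N L u = -alphaG L N u := by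
    rw [alphaG, alphaG, mink_comm, eq_neg_of_add_eq_zero_left hLN]
  rw [sigmaL, sigmaN, hG, mul_neg, ← sub_eq_add_neg]
  rfl

end LightlikeFrame

end LightlikeFrames

/-- If `α_L(u₀) ≠ 0`, the osculating lightlike surface
`f_L(u,v) = γ̂(u) + v L(u)` has a cuspidal edge at the singular point `(u₀, 1/α_L(u₀))`
iff `σ_L(u₀) ≠ 0`; similarly for `f_N` with `α_N`, `σ_N`. -/
theorem cuspidal_edge_criterion (a b : ℝ) (γ L N : ℝ → R3)
    (hframe : LightlikeFrame (Set.Ioo a b) γ L N)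
    (u₀ : ℝ) (hu₀ : u₀ ∈ Set.Ioo a b) :
    (alphaL γ L u₀ ≠ 0 →
      (IsCuspidalEdge (fun p : ℝ × ℝ => γ p.1 + p.2 • L p.1) (u₀, 1 / alphaL γ L u₀) ↔
        sigmaL γ L N u₀ ≠ 0)) ∧
    (alphaN γ N u₀ ≠ 0 →
      (IsCuspidalEdge (fun p : ℝ × ℝ => γ p.1 + p.2 • N p.1) (u₀, 1 / alphaN γ N u₀) ↔
        sigmaN γ L N u₀ ≠ 0)) := by
  refine ⟨hframe.isCuspidalEdge_ruledSurface_iff isOpen_Ioo hu₀, fun hα => ?_⟩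
  rw [← hframe.sigmaL_swap isOpen_Ioo hu₀]
  exact hframe.swap.isCuspidalEdge_ruledSurface_iff isOpen_Ioo hu₀ hα
end
end
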